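/- arXiv:1511.04087 — 4 statements merged into one kernel-verified Lean document; each statement's English description precedes it below -/
import Mathlib

section
/- Suppose r > 0 and 0 < |u₀| < r are sufficiently small that T_u maps B̄_r(u) into itself. Then the image T_u(B̄_r(u)) is precompact (totally bounded) in (𝕍, ‖·‖). -/
open Filter Topology MeasureTheory

/-- `A₂ = d(d+2)`. -/
noncomputable def A2 (d : ℕ) : ℝ := (d : ℝ) * ((d : ℝ) + 2)

/-- `A₃ = (1/4)·d·(d+2)²·q²`. -/
noncomputable def A3 (d : ℕ) (q : ℝ) : ℝ := (1/4) * (d : ℝ) * ((d : ℝ) + 2)^2 * q^2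

/-- The fundamental matrix `Φ(t,s)` of the linear system. -/
noncomputable def Phi (d : ℕ) (t s : ℝ) : Matrix (Fin 4) (Fin 4) ℝ :=
  !![1, (A2 d / (2 * (d : ℝ))) * (Real.exp (-2*(t-s)) - 1), 0, 0;
     0, Real.exp (-2*(t-s)), 0, 0;
     0, 0, Real.exp (-2*(t-s)), 0;
     0, 0, 0, Real.exp (-2*(t-s))]

/-- The nonlinearity `b : ℝ⁴ → ℝ⁴`. -/
noncomputable def bfun (d : ℕ) (q : ℝ) (v : Fin 4 → ℝ) : Fin 4 → ℝ :=
  ![ -(v 0) * ((d : ℝ) * (v 0)^2 + (v 2)^2 - 2 * v 2) + (2 * A3 d q / (d : ℝ)) * (v 3)^2,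
     -2 * v 1 * ((d : ℝ) * (v 0)^2 - v 0 + (v 2)^2 - 2 * v 2),
     -(v 2) * ((d : ℝ) * (v 0)^2 + (v 2)^2 - 3 * v 2) + (d : ℝ) * (v 0)^2 + A3 d q * (v 3)^2,
     -(v 3) * ((d : ℝ) * (v 0)^2 - 2 * v 0 + (v 2)^2 - 3 * v 2) ]

/-- The nonlinear integral operator `T_u v(t) = u(t) - ∫_t^∞ Φ(t,s) b(v(s)) ds`. -/
noncomputable def Tmap (d : ℕ) (q : ℝ) (u v : ℝ → Fin 4 → ℝ) : ℝ → Fin 4 → ℝ :=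
  fun t => u t - ∫ s in Set.Ioi t, (Phi d t s).mulVec (bfun d q (v s))

/-- Membership in the Banach space `𝕍`: continuity on `[0,∞)` and finiteness of the
weighted sup norm `sup_{t ≥ 0} e^{2t}|v(t)|`. -/
def memV (v : ℝ → Fin 4 → ℝ) : Prop :=
  ContinuousOn v (Set.Ici 0) ∧ ∃ M : ℝ, ∀ t ≥ (0:ℝ), Real.exp (2*t) * ‖v t‖ ≤ M

/-- The weighted sup norm `‖v‖ = sup_{t ≥ 0} e^{2t}|v(t)|`. -/
noncomputable def Vnorm (v : ℝ → Fin 4 → ℝ) : ℝ :=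
  ⨆ t : Set.Ici (0:ℝ), Real.exp (2 * (t : ℝ)) * ‖v (t : ℝ)‖

/-- Membership in the closed ball `B̄_r(u) = {v ∈ 𝕍 : ‖v - u‖ ≤ r}`. -/
def inBall (r : ℝ) (u v : ℝ → Fin 4 → ℝ) : Prop :=
  memV v ∧ ∀ t ≥ (0:ℝ), Real.exp (2*t) * ‖v t - u t‖ ≤ r

/-- The initial vector `u₀ = ((A₂/(2d))y₀, y₀, z₀, w₀)`. -/
noncomputable def uZero (d : ℕ) (y0 z0 w0 : ℝ) : Fin 4 → ℝ :=
  ![A2 d / (2 * (d : ℝ)) * y0, y0, z0, w0]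

/-- The solution `u(t) = Φ(t,0)u₀ = e^{-2t} u₀` of the linear system. -/
noncomputable def ufun (d : ℕ) (y0 z0 w0 : ℝ) : ℝ → Fin 4 → ℝ :=
  fun t => Real.exp (-2*t) • uZero d y0 z0 w0

/-- An (entrywise sup) norm on 4×4 matrices. -/
noncomputable def matNorm (M : Matrix (Fin 4) (Fin 4) ℝ) : ℝ := ⨆ i, ⨆ j, |M i j|

/-!
The compactness of `T_u` is that of the linear operator `h ↦ ∫_t^∞ Φ(t,s) h(s) ds`. Since `b`
has no constant or linear part, it maps a bounded set of functions decaying like `e^{-2t}` to a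
bounded set of functions decaying like `e^{-4t}`. Writing `Φ(t,s) = P + e^{-2(t-s)} Q`, the
operator multiplied by the weight `e^{2t}` becomes
`e^{2t} ∫_t^∞ P h(s) ds + ∫_t^∞ e^{2s} Q h(s) ds`. On a bounded set of such `h` both terms are
uniformly Lipschitz and uniformly `O(e^{-2t})`, so Arzelà–Ascoli on a compact interval, with the
uniform decay beyond it, yields finite nets.
-/

section ArzelaAscoli

open scoped BoundedContinuousFunction

theorem exists_finite_net_of_equicontinuous_of_vanishing {ι X E : Type*} [TopologicalSpace X]
    [NormedAddCommGroup E] [ProperSpace E] {g : ι → X → E} {C : ℝ} (hg : Equicontinuous g)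
    (hbound : ∀ i x, ‖g i x‖ ≤ C)
    (hvanish : ∀ ε > 0, ∀ᶠ x in cocompact X, ∀ i, ‖g i x‖ ≤ ε) {ε : ℝ} (hε : 0 < ε) :
    ∃ F : Set ι, F.Finite ∧ ∀ i, ∃ j ∈ F, ∀ x, ‖g i x - g j x‖ ≤ ε := by
  obtain ⟨K, hK, hKg⟩ := mem_cocompact.1 (hvanish (ε / 2) (half_pos hε))
  have : CompactSpace K := isCompact_iff_compactSpace.1 hK
  let G : ι → K →ᵇ E := fun i =>
    .mkOfCompact ⟨fun x => g i x, (hg.continuous i).comp continuous_subtype_val⟩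
  have hG : TotallyBounded (Set.range G) := by
    refine (BoundedContinuousFunction.arzela_ascoli _ (isCompact_closedBall 0 C) _ ?_
      ?_).totallyBounded.subset subset_closure
    · rintro _ x ⟨i, rfl⟩
      exact mem_closedBall_zero_iff.2 (hbound i x)
    · intro x V hV
      filter_upwards [continuous_subtype_val.tendsto x (hg x V hV)] with y hy
      rintro ⟨_, i, rfl⟩
      exact hy i
  obtain ⟨F, -, hF, hcover⟩ := Set.exists_subset_image_finite_and.1
    (Set.image_univ (f := G) ▸ Metric.finite_approx_of_totallyBounded hG ε hε)
  refine ⟨F, hF, fun i => ?_⟩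
  obtain ⟨_, ⟨j, hj, rfl⟩, hij⟩ := Set.mem_iUnion₂.1 (hcover ⟨i, Set.mem_univ i, rfl⟩)
  refine ⟨j, hj, fun x => ?_⟩
  by_cases hx : x ∈ K
  · rw [← dist_eq_norm]
    exact (BoundedContinuousFunction.dist_coe_le_dist (f := G i) (g := G j) ⟨x, hx⟩).trans
      (Metric.mem_ball.1 hij).le
  · linarith [norm_sub_le (g i x) (g j x), hKg hx i, hKg hx j]

end ArzelaAscoli

theorem exists_norm_le_mul_pow_of_homogeneous {E F : Type*} [NormedAddCommGroup E]
    [NormedSpace ℝ E] [ProperSpace E] [NormedAddCommGroup F] [NormedSpace ℝ F] {f : E → F} {n : ℕ}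
    (hf : Continuous f) (hhom : ∀ (c : ℝ) x, f (c • x) = c ^ n • f x) :
    ∃ C ≥ 0, ∀ x, ‖f x‖ ≤ C * ‖x‖ ^ n := by
  obtain ⟨C, hC⟩ := (isCompact_closedBall (0 : E) 1).exists_bound_of_continuousOn hf.continuousOn
  refine ⟨C, (norm_nonneg _).trans (hC 0 (Metric.mem_closedBall_self zero_le_one)), fun x => ?_⟩
  set e := ‖x‖⁻¹ • x
  have he : e ∈ Metric.closedBall 0 1 := by
    rw [mem_closedBall_zero_iff, norm_smul, norm_inv, norm_norm]
    exact inv_mul_le_one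
  have hx : x = ‖x‖ • e := by
    rcases eq_or_ne x 0 with rfl | h
    · simp
    · exact (smul_inv_smul₀ (norm_ne_zero_iff.2 h) x).symm
  calc ‖f x‖ = ‖x‖ ^ n * ‖f e‖ := by
        nth_rewrite 1 [hx]
        rw [hhom, norm_smul, norm_pow, norm_norm]
    _ ≤ C * ‖x‖ ^ n := by
        rw [mul_comm]
        gcongr
        exact hC e he

theorem integrableOn_mul_exp_neg_Ioi (C : ℝ) {β : ℝ} (hβ : 0 < β) (t : ℝ) :
    IntegrableOn (fun s => C * Real.exp (-β * s)) (Set.Ioi t) :=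
  (integrableOn_exp_mul_Ioi (neg_lt_zero.2 hβ) t).const_mul C

/-- Continuity on `[0,∞)` together with the bound `‖f t‖ ≤ C e^{-βt}` there: `ExpDecay 2 C` is
the closed ball of radius `C` about `0` in `𝕍`, and the other rates `β` measure the decay gained by
the nonlinearity. -/
structure ExpDecay {E : Type*} [NormedAddCommGroup E] (β C : ℝ) (f : ℝ → E) : Prop where
  continuousOn : ContinuousOn f (Set.Ici 0)
  norm_le : ∀ t, 0 ≤ t → ‖f t‖ ≤ C * Real.exp (-β * t)

/-- The weighted tail integral `e^{αt} ∫_t^∞ f`. -/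
noncomputable def weightedTail {E : Type*} [NormedAddCommGroup E] [NormedSpace ℝ E] (α : ℝ)
    (f : ℝ → E) (t : ℝ) : E :=
  Real.exp (α * t) • ∫ s in Set.Ioi t, f s

namespace ExpDecay

variable {E F : Type*} [NormedAddCommGroup E] [NormedAddCommGroup F] {f g : ℝ → E}
  {α β γ C D s t : ℝ}

theorem const_nonneg (hf : ExpDecay β C f) : 0 ≤ C := by
  simpa using (norm_nonneg _).trans (hf.norm_le 0 le_rfl)

theorem mono_rate (hf : ExpDecay γ C f) (h : β ≤ γ) : ExpDecay β C f where
  continuousOn := hf.continuousOn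
  norm_le t ht := (hf.norm_le t ht).trans <| by
    have := hf.const_nonneg
    gcongr

theorem add (hf : ExpDecay β C f) (hg : ExpDecay β D g) : ExpDecay β (C + D) (f + g) where
  continuousOn := hf.continuousOn.add hg.continuousOn
  norm_le t ht := by
    rw [add_mul]
    exact norm_add_le_of_le (hf.norm_le t ht) (hg.norm_le t ht)

theorem comp_of_norm_le_pow {φ : E → F} {n : ℕ} (hf : ExpDecay β C f) (hφ : Continuous φ)
    (hD : 0 ≤ D) (hle : ∀ x, ‖φ x‖ ≤ D * ‖x‖ ^ n) :
    ExpDecay (n * β) (D * C ^ n) (φ ∘ f) where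
  continuousOn := hφ.comp_continuousOn hf.continuousOn
  norm_le t ht := by
    calc ‖φ (f t)‖ ≤ D * ‖f t‖ ^ n := hle _
      _ ≤ D * (C * Real.exp (-β * t)) ^ n := by gcongr; exact hf.norm_le t ht
      _ = D * C ^ n * Real.exp (-(n * β) * t) := by
        rw [mul_pow, ← Real.exp_nat_mul, mul_assoc]; ring_nf

theorem integrableOn_Ioi (hf : ExpDecay β C f) (hβ : 0 < β) (ht : 0 ≤ t) :
    IntegrableOn f (Set.Ioi t) := by
  have hcont : ContinuousOn f (Set.Ioi t) :=
    hf.continuousOn.mono fun s hs => ht.trans (le_of_lt hs)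
  refine (integrableOn_mul_exp_neg_Ioi C hβ t).mono'
    (hcont.aestronglyMeasurable measurableSet_Ioi) ?_
  filter_upwards [self_mem_ae_restrict measurableSet_Ioi] with s hs
  exact hf.norm_le s (ht.trans (le_of_lt hs))

variable [NormedSpace ℝ E] [NormedSpace ℝ F]

theorem clm_comp (hf : ExpDecay β C f) (L : E →L[ℝ] F) : ExpDecay β (‖L‖ * C) (L ∘ f) where
  continuousOn := L.continuous.comp_continuousOn hf.continuousOn
  norm_le t ht := by
    rw [mul_assoc]
    exact L.le_opNorm_of_le (hf.norm_le t ht)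

theorem exp_smul (hf : ExpDecay β C f) (γ : ℝ) :
    ExpDecay (β - γ) C (fun t => Real.exp (γ * t) • f t) where
  continuousOn := ContinuousOn.smul (by fun_prop) hf.continuousOn
  norm_le t ht := by
    calc ‖Real.exp (γ * t) • f t‖ = Real.exp (γ * t) * ‖f t‖ := by
          rw [norm_smul, Real.norm_of_nonneg (Real.exp_pos _).le]
      _ ≤ Real.exp (γ * t) * (C * Real.exp (-β * t)) := by gcongr; exact hf.norm_le t ht
      _ = C * Real.exp (-(β - γ) * t) := by
        rw [mul_left_comm, ← Real.exp_add]; ring_nf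

theorem norm_weightedTail_le (hf : ExpDecay β C f) (hβ : 0 < β) (ht : 0 ≤ t) :
    ‖weightedTail α f t‖ ≤ C / β * Real.exp (-(β - α) * t) := by
  have htail : ‖∫ s in Set.Ioi t, f s‖ ≤ C / β * Real.exp (-β * t) := by
    refine (norm_integral_le_of_norm_le (integrableOn_mul_exp_neg_Ioi C hβ t) ?_).trans_eq ?_
    · filter_upwards [self_mem_ae_restrict measurableSet_Ioi] with s hs
      exact hf.norm_le s (ht.trans (le_of_lt hs))
    · rw [integral_const_mul, integral_exp_mul_Ioi (neg_lt_zero.2 hβ), neg_div_neg_eq]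
      ring
  calc ‖weightedTail α f t‖ = Real.exp (α * t) * ‖∫ s in Set.Ioi t, f s‖ := by
        rw [weightedTail, norm_smul, Real.norm_of_nonneg (Real.exp_pos _).le]
    _ ≤ Real.exp (α * t) * (C / β * Real.exp (-β * t)) := by gcongr
    _ = C / β * Real.exp (-(β - α) * t) := by
        rw [mul_left_comm, ← Real.exp_add]; ring_nf

theorem norm_intervalIntegral_le (hf : ExpDecay β C f) (hβ : 0 ≤ β) (hs : 0 ≤ s) (hst : s ≤ t) :
    ‖∫ x in s..t, f x‖ ≤ C * Real.exp (-β * s) * (t - s) := by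
  have hC := hf.const_nonneg
  rw [← abs_of_nonneg (sub_nonneg.2 hst)]
  refine intervalIntegral.norm_integral_le_of_norm_le_const fun x hx => ?_
  have hsx : s ≤ x := (Set.uIoc_of_le hst ▸ hx).1.le
  refine (hf.norm_le x (hs.trans hsx)).trans ?_
  gcongr C * Real.exp ?_
  exact mul_le_mul_of_nonpos_left hsx (neg_nonpos.2 hβ)

theorem weightedTail_sub_weightedTail (hf : ExpDecay β C f) (hβ : 0 < β) (hs : 0 ≤ s)
    (hst : s ≤ t) :
    weightedTail α f t - weightedTail α f s =
      (1 - Real.exp (-(α * (t - s)))) • weightedTail α f t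
        - Real.exp (α * s) • ∫ x in s..t, f x := by
  have hint := hf.integrableOn_Ioi hβ hs
  have hsplit : (∫ x in Set.Ioi s, f x) = (∫ x in s..t, f x) + ∫ x in Set.Ioi t, f x :=
    (intervalIntegral.integral_interval_add_Ioi hint
      (hint.mono_set (Set.Ioi_subset_Ioi hst))).symm
  have hexp : Real.exp (-(α * (t - s))) * Real.exp (α * t) = Real.exp (α * s) := by
    rw [← Real.exp_add]; ring_nf
  rw [weightedTail, weightedTail, hsplit, ← hexp]
  module

theorem norm_weightedTail_sub_le (hf : ExpDecay β C f) (hα : 0 ≤ α) (hαβ : α ≤ β) (hβ : 0 < β)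
    (hs : 0 ≤ s) (hst : s ≤ t) :
    ‖weightedTail α f t - weightedTail α f s‖ ≤ (α / β + 1) * C * (t - s) := by
  have hC := hf.const_nonneg
  have hts : 0 ≤ t - s := sub_nonneg.2 hst
  have hweight : 1 - Real.exp (-(α * (t - s))) ≤ α * (t - s) := by
    linarith [Real.one_sub_le_exp_neg (α * (t - s))]
  have hweight₀ : 0 ≤ 1 - Real.exp (-(α * (t - s))) :=
    sub_nonneg.2 (Real.exp_le_one_iff.2 (neg_nonpos.2 (mul_nonneg hα hts)))
  have htail : ‖weightedTail α f t‖ ≤ C / β := by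
    refine (hf.norm_weightedTail_le hβ (hs.trans hst)).trans
      (mul_le_of_le_one_right (by positivity) (Real.exp_le_one_iff.2 ?_))
    exact mul_nonpos_of_nonpos_of_nonneg (by linarith) (hs.trans hst)
  have hincr : Real.exp (α * s) * ‖∫ x in s..t, f x‖ ≤ C * (t - s) :=
    calc Real.exp (α * s) * ‖∫ x in s..t, f x‖
        ≤ Real.exp (α * s) * (C * Real.exp (-β * s) * (t - s)) := by
          gcongr; exact hf.norm_intervalIntegral_le hβ.le hs hst
      _ = Real.exp ((α - β) * s) * (C * (t - s)) := by
          rw [show (α - β) * s = α * s + -β * s by ring, Real.exp_add]; ring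
      _ ≤ C * (t - s) := mul_le_of_le_one_left (by positivity)
          (Real.exp_le_one_iff.2 (mul_nonpos_of_nonpos_of_nonneg (sub_nonpos.2 hαβ) hs))
  rw [hf.weightedTail_sub_weightedTail hβ hs hst]
  calc _ ≤ (1 - Real.exp (-(α * (t - s)))) * ‖weightedTail α f t‖
        + Real.exp (α * s) * ‖∫ x in s..t, f x‖ := by
        refine (norm_sub_le _ _).trans_eq ?_
        rw [norm_smul, norm_smul, Real.norm_of_nonneg hweight₀,
          Real.norm_of_nonneg (Real.exp_pos _).le]
    _ ≤ α * (t - s) * (C / β) + C * (t - s) := by gcongr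
    _ = (α / β + 1) * C * (t - s) := by ring

open scoped NNReal in
theorem lipschitzWith_weightedTail (hf : ExpDecay β C f) (hα : 0 ≤ α) (hαβ : α ≤ β)
    (hβ : 0 < β) :
    LipschitzWith (Real.toNNReal ((α / β + 1) * C)) (fun t : ℝ≥0 => weightedTail α f t) := by
  refine .of_dist_le' fun t s => ?_
  wlog hst : s ≤ t generalizing s t
  · rw [dist_comm, dist_comm t]
    exact this s t (le_of_not_ge hst)
  rw [dist_eq_norm, NNReal.dist_eq, abs_of_nonneg (sub_nonneg.2 (NNReal.coe_le_coe.2 hst))]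
  exact hf.norm_weightedTail_sub_le hα hαβ hβ s.coe_nonneg hst

end ExpDecay

/-- The homogeneous part of degree two of the nonlinearity `b`. -/
noncomputable def bQuadratic (d : ℕ) (q : ℝ) (v : Fin 4 → ℝ) : Fin 4 → ℝ :=
  ![2 * v 0 * v 2 + 2 * A3 d q / d * v 3 ^ 2, 2 * v 1 * (v 0 + 2 * v 2),
    3 * v 2 ^ 2 + d * v 0 ^ 2 + A3 d q * v 3 ^ 2, v 3 * (2 * v 0 + 3 * v 2)]

/-- The homogeneous part of degree three of the nonlinearity `b`. -/
noncomputable def bCubic (d : ℕ) (v : Fin 4 → ℝ) : Fin 4 → ℝ :=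
  -(d * v 0 ^ 2 + v 2 ^ 2) • ![v 0, 2 * v 1, v 2, v 3]

section Nonlinearity

variable (d : ℕ) (q : ℝ)

theorem bfun_eq_bQuadratic_add_bCubic : bfun d q = bQuadratic d q + bCubic d := by
  ext v i
  fin_cases i <;> simp [bfun, bQuadratic, bCubic] <;> ring

theorem continuous_bQuadratic : Continuous (bQuadratic d q) := by
  unfold bQuadratic
  fun_prop

theorem continuous_bCubic : Continuous (bCubic d) := by
  unfold bCubic
  fun_prop

theorem bQuadratic_smul (c : ℝ) (v : Fin 4 → ℝ) :
    bQuadratic d q (c • v) = c ^ 2 • bQuadratic d q v := by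
  ext i
  fin_cases i <;> simp [bQuadratic] <;> ring

theorem bCubic_smul (c : ℝ) (v : Fin 4 → ℝ) : bCubic d (c • v) = c ^ 3 • bCubic d v := by
  ext i
  fin_cases i <;> simp [bCubic] <;> ring

theorem exists_expDecay_bfun_comp {β : ℝ} (hβ : 0 ≤ β) (M : ℝ) :
    ∃ C, ∀ v, ExpDecay β M v → ExpDecay (2 * β) C (bfun d q ∘ v) := by
  obtain ⟨C₂, hC₂, hle₂⟩ :=
    exists_norm_le_mul_pow_of_homogeneous (continuous_bQuadratic d q) (bQuadratic_smul d q)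
  obtain ⟨C₃, hC₃, hle₃⟩ :=
    exists_norm_le_mul_pow_of_homogeneous (continuous_bCubic d) (bCubic_smul d)
  refine ⟨C₂ * M ^ 2 + C₃ * M ^ 3, fun v hv => ?_⟩
  rw [bfun_eq_bQuadratic_add_bCubic]
  exact (hv.comp_of_norm_le_pow (continuous_bQuadratic d q) hC₂ hle₂).add
    ((hv.comp_of_norm_le_pow (continuous_bCubic d) hC₃ hle₃).mono_rate (by push_cast; linarith))

end Nonlinearity

/-- The part of `Φ(t,s)` independent of `t` and `s`. -/
noncomputable def phiConst (d : ℕ) : (Fin 4 → ℝ) →L[ℝ] (Fin 4 → ℝ) :=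
  (Matrix.mulVecLin !![1, -(A2 d / (2 * (d : ℝ))), 0, 0;
     0, 0, 0, 0; 0, 0, 0, 0; 0, 0, 0, 0]).toContinuousLinearMap

/-- The coefficient of `e^{-2(t-s)}` in `Φ(t,s)`. -/
noncomputable def phiExp (d : ℕ) : (Fin 4 → ℝ) →L[ℝ] (Fin 4 → ℝ) :=
  (Matrix.mulVecLin !![0, A2 d / (2 * (d : ℝ)), 0, 0;
     0, 1, 0, 0; 0, 0, 1, 0; 0, 0, 0, 1]).toContinuousLinearMap

/-- The integral `∫_t^∞ Φ(t,s) h(s) ds` multiplied by the weight `e^{2t}` of the norm of `𝕍`. -/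
noncomputable def weightedPhiTail (d : ℕ) (h : ℝ → Fin 4 → ℝ) (t : ℝ) : Fin 4 → ℝ :=
  Real.exp (2 * t) • ∫ s in Set.Ioi t, (Phi d t s).mulVec (h s)

theorem Phi_mulVec (d : ℕ) (t s : ℝ) (x : Fin 4 → ℝ) :
    (Phi d t s).mulVec x = phiConst d x + Real.exp (-2 * (t - s)) • phiExp d x := by
  ext i
  fin_cases i <;>
    simp [Phi, phiConst, phiExp, Matrix.mulVec, dotProduct, Fin.sum_univ_four]
  ring

section WeightedPhiTail

open scoped NNReal

variable {h : ℝ → Fin 4 → ℝ} {β C t : ℝ} (d : ℕ)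

theorem weightedPhiTail_eq_add (hh : ExpDecay β C h) (hβ : 2 < β) (ht : 0 ≤ t) :
    weightedPhiTail d h t = weightedTail 2 (phiConst d ∘ h) t
      + weightedTail 0 (fun s => Real.exp (2 * s) • phiExp d (h s)) t := by
  have hexp (s : ℝ) : Real.exp (2 * t) * Real.exp (-2 * (t - s)) = Real.exp (2 * s) := by
    rw [← Real.exp_add]; ring_nf
  have hconst := (hh.clm_comp (phiConst d)).integrableOn_Ioi (by linarith) ht
  have hgrow := ((hh.clm_comp (phiExp d)).exp_smul 2).integrableOn_Ioi (by linarith) ht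
  have hkernel (s : ℝ) : Real.exp (2 * t) • (Phi d t s).mulVec (h s) =
      Real.exp (2 * t) • phiConst d (h s) + Real.exp (2 * s) • phiExp d (h s) := by
    rw [Phi_mulVec, smul_add, smul_smul, hexp]
  rw [weightedPhiTail, weightedTail, weightedTail, zero_mul, Real.exp_zero, one_smul,
    ← integral_smul, ← integral_smul]
  simp only [hkernel]
  exact integral_add (hconst.smul (Real.exp (2 * t))) hgrow

theorem norm_weightedPhiTail_le (hh : ExpDecay β C h) (hβ : 2 < β) (ht : 0 ≤ t) :
    ‖weightedPhiTail d h t‖ ≤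
      (‖phiConst d‖ * C / β + ‖phiExp d‖ * C / (β - 2)) * Real.exp (-(β - 2) * t) := by
  have hconst := (hh.clm_comp (phiConst d)).norm_weightedTail_le (α := 2) (by linarith) ht
  have hgrow := ((hh.clm_comp (phiExp d)).exp_smul 2).norm_weightedTail_le (α := 0)
    (by linarith) ht
  rw [weightedPhiTail_eq_add d hh hβ ht, add_mul]
  rw [sub_zero] at hgrow
  exact norm_add_le_of_le hconst hgrow

theorem lipschitzWith_weightedPhiTail (hh : ExpDecay β C h) (hβ : 2 < β) :
    LipschitzWith (Real.toNNReal ((2 / β + 1) * (‖phiConst d‖ * C))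
      + Real.toNNReal (‖phiExp d‖ * C)) (fun t : ℝ≥0 => weightedPhiTail d h t) := by
  have hconst := (hh.clm_comp (phiConst d)).lipschitzWith_weightedTail zero_le_two hβ.le
    (by linarith)
  have hgrow := ((hh.clm_comp (phiExp d)).exp_smul 2).lipschitzWith_weightedTail le_rfl
    (by linarith) (by linarith)
  rw [zero_div, zero_add, one_mul] at hgrow
  simp only [fun t : ℝ≥0 => weightedPhiTail_eq_add d hh hβ t.coe_nonneg]
  exact hconst.add hgrow

theorem exists_finite_net_weightedPhiTail (hβ : 2 < β) (C : ℝ) {ε : ℝ} (hε : 0 < ε) :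
    ∃ F : Set {h : ℝ → Fin 4 → ℝ // ExpDecay β C h}, F.Finite ∧ ∀ h, ExpDecay β C h →
      ∃ k ∈ F, ∀ t, 0 ≤ t → ‖weightedPhiTail d h t - weightedPhiTail d k t‖ ≤ ε := by
  let g : {h : ℝ → Fin 4 → ℝ // ExpDecay β C h} → ℝ≥0 → Fin 4 → ℝ :=
    fun h t => weightedPhiTail d h t
  set D := ‖phiConst d‖ * C / β + ‖phiExp d‖ * C / (β - 2)
  have hdecay (h) (t : ℝ≥0) : ‖g h t‖ ≤ D * Real.exp (-(β - 2) * t) :=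
    norm_weightedPhiTail_le d h.2 hβ t.coe_nonneg
  have hequi : Equicontinuous g :=
    (LipschitzWith.uniformEquicontinuous g _
      fun h => lipschitzWith_weightedPhiTail d h.2 hβ).equicontinuous
  have hbound (h) (t : ℝ≥0) : ‖g h t‖ ≤ D := by
    have hD : 0 ≤ D := by simpa using (norm_nonneg _).trans (hdecay h 0)
    refine (hdecay h t).trans (mul_le_of_le_one_right hD (Real.exp_le_one_iff.2 ?_))
    exact mul_nonpos_of_nonpos_of_nonneg (by linarith) t.coe_nonneg
  have htendsto : Tendsto (fun t : ℝ≥0 => D * Real.exp (-(β - 2) * t)) (cocompact ℝ≥0) (𝓝 0) := by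
    rw [cocompact_eq_atTop, ← mul_zero D]
    refine (Real.tendsto_exp_atBot.comp ?_).const_mul D
    exact (NNReal.tendsto_coe_atTop.2 tendsto_id).const_mul_atTop_of_neg (by linarith)
  have hvanish : ∀ δ > 0, ∀ᶠ t in cocompact ℝ≥0, ∀ h, ‖g h t‖ ≤ δ := fun δ hδ => by
    filter_upwards [htendsto.eventually_le_const hδ] with t ht h
    exact (hdecay h t).trans ht
  obtain ⟨F, hF, hcover⟩ :=
    exists_finite_net_of_equicontinuous_of_vanishing hequi hbound hvanish hε
  refine ⟨F, hF, fun h hh => ?_⟩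
  obtain ⟨k, hk, hclose⟩ := hcover ⟨h, hh⟩
  exact ⟨k, hk, fun t ht => hclose ⟨t, ht⟩⟩

end WeightedPhiTail

section WeightedSpace

variable {d : ℕ} {q : ℝ} {c u v h : ℝ → Fin 4 → ℝ} {t : ℝ}

theorem exp_mul_le_iff_le_mul_exp_neg {a x M : ℝ} :
    Real.exp a * x ≤ M ↔ x ≤ M * Real.exp (-a) := by
  rw [Real.exp_neg, ← div_eq_mul_inv, le_div_iff₀' (Real.exp_pos a)]

theorem memV_iff_exists_expDecay : memV v ↔ ∃ M, ExpDecay 2 M v := by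
  simp only [memV, exp_mul_le_iff_le_mul_exp_neg, ← neg_mul, ← exists_and_left]
  exact exists_congr fun M => ⟨fun h => ⟨h.1, h.2⟩, fun h => ⟨h.continuousOn, h.norm_le⟩⟩

theorem exists_expDecay_of_inBall (hc : memV c) (r : ℝ) :
    ∃ M, ∀ v, inBall r c v → ExpDecay 2 M v := by
  obtain ⟨M, hM⟩ := memV_iff_exists_expDecay.1 hc
  refine ⟨M + r, fun v hv => ⟨hv.1.1, fun t ht => ?_⟩⟩
  have hvc : ‖v t - c t‖ ≤ r * Real.exp (-2 * t) := by
    simpa only [neg_mul] using exp_mul_le_iff_le_mul_exp_neg.1 (hv.2 t ht)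
  rw [add_mul]
  exact (norm_le_norm_add_norm_sub' _ _).trans (add_le_add (hM.norm_le t ht) hvc)

theorem memV_ufun (d : ℕ) (y0 z0 w0 : ℝ) : memV (ufun d y0 z0 w0) := by
  refine memV_iff_exists_expDecay.2 ⟨‖uZero d y0 z0 w0‖, ?_, fun t _ => ?_⟩
  · unfold ufun
    fun_prop
  · rw [ufun, norm_smul, Real.norm_of_nonneg (Real.exp_pos _).le, mul_comm]

theorem exp_mul_norm_Tmap_sub :
    Real.exp (2 * t) * ‖Tmap d q u v t - (u t - ∫ s in Set.Ioi t, (Phi d t s).mulVec (h s))‖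
      = ‖weightedPhiTail d (bfun d q ∘ v) t - weightedPhiTail d h t‖ := by
  simp only [Tmap, weightedPhiTail, Function.comp_apply]
  rw [sub_sub_sub_cancel_left, norm_sub_rev, ← smul_sub, norm_smul,
    Real.norm_of_nonneg (Real.exp_pos _).le]

end WeightedSpace

theorem stmt3_general (d : ℕ) (q : ℝ) (u : ℝ → Fin 4 → ℝ) {c : ℝ → Fin 4 → ℝ} (hc : memV c)
    (r : ℝ) :
    ∀ ε > (0 : ℝ), ∃ F : Set (ℝ → Fin 4 → ℝ), F.Finite ∧
      ∀ v, inBall r c v →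
        ∃ w ∈ F, ∀ t ≥ (0 : ℝ), Real.exp (2 * t) * ‖Tmap d q u v t - w t‖ ≤ ε := by
  intro ε hε
  obtain ⟨M, hM⟩ := exists_expDecay_of_inBall hc r
  obtain ⟨C, hC⟩ := exists_expDecay_bfun_comp d q zero_le_two M
  obtain ⟨F, hF, hcover⟩ := exists_finite_net_weightedPhiTail d (β := 2 * 2) (by norm_num) C hε
  refine ⟨_, hF.image fun h t => u t - ∫ s in Set.Ioi t, (Phi d t s).mulVec (h.1 s),
    fun v hv => ?_⟩
  obtain ⟨h, hh, hclose⟩ := hcover _ (hC v (hM v hv))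
  refine ⟨_, Set.mem_image_of_mem _ hh, fun t ht => ?_⟩
  exact exp_mul_norm_Tmap_sub.trans_le (hclose t ht)

/-- If `r` and `0 < |u₀| < r` are small enough that `T_u` maps `B̄_r(u)` into itself, then
the image `T_u(B̄_r(u))` is totally bounded in the norm of `𝕍`. -/
theorem stmt3 (d : ℕ) (hd : 2 ≤ d) (q : ℝ) (y0 z0 w0 r : ℝ) (hr : 0 < r)
    (hu0 : 0 < ‖uZero d y0 z0 w0‖) (hu0r : ‖uZero d y0 z0 w0‖ < r)
    (hmap : ∀ v, inBall r (ufun d y0 z0 w0) v →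
      inBall r (ufun d y0 z0 w0) (Tmap d q (ufun d y0 z0 w0) v)) :
    ∀ ε > (0:ℝ), ∃ F : Set (ℝ → Fin 4 → ℝ), F.Finite ∧
      ∀ v, inBall r (ufun d y0 z0 w0) v →
        ∃ w ∈ F, ∀ t ≥ (0:ℝ),
          Real.exp (2*t) * ‖Tmap d q (ufun d y0 z0 w0) v t - w t‖ ≤ ε :=
  stmt3_general d q _ (memV_ufun d y0 z0 w0) r
end

section
/- For every pair of real numbers α, β there exists a solution (X, Ỹ, Z̃, W) : [0,∞) → ℝ⁴ of the system (★★) such that: (a) Ỹ(t) > 0 for all t ≥ 0; (b) sup_{t≥0} e^{2t}|(X, Ỹ, Z̃, W)(t)| < ∞ (in particular the solution tends to (0,0,0,0) as t → ∞); (c) lim_{t→∞} Z̃(t)/Ỹ(t) = α; and (d) lim_{t→∞} W(t)/Ỹ(t) = β. -/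
open Filter Topology

/-!
In the variable `s = s₀ exp (-2t)` the decaying solutions have the form `s • v s` with `v`
continuous up to `s = 0`, after replacing `X` by `U = X - (A₂ / 2d) Ỹ` to diagonalise the linear
part. Since the remaining terms are at least quadratic, `v` solves a singular equation
`v' = g (s, v) - k (v - v 0) / s` with smooth `g`: `k = 0` in the directions `Ỹ, Z̃, W` of
eigenvalue `-2`, where `v 0` is therefore free, and `k = 1` in the neutral direction `U`, where we
take `v 0 = 0`. Inverting `v' + k v / s` by an averaging integral turns this into a fixed-point
equation, contracting for small `s`. With `v 0 = (0, 1, α, β)` the ratios `Z̃ / Ỹ` and `W / Ỹ` tend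
to `α` and `β`, and a small enough `s₀` makes the solution exist, with `Ỹ > 0`, for all `t ≥ 0`.
-/

section EulerPrimitive

variable {E : Type*} [NormedAddCommGroup E] [NormedSpace ℝ E] {k s : ℝ} {f g : ℝ → E}

/-- The solution `y`, vanishing at `0`, of the singular linear equation `y' = g - (k / s) y`. For
`0 < s` it is `s ^ (-k) ∫₀ˢ σ ^ k g(σ) dσ`; the rescaled integral also makes sense at `s = 0`. -/
noncomputable def eulerPrimitive (k : ℝ) (g : ℝ → E) (s : ℝ) : E :=
  s • ∫ θ in (0 : ℝ)..1, θ ^ k • g (s * θ)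

lemma eulerPrimitive_zero (k : ℝ) (g : ℝ → E) : eulerPrimitive k g 0 = 0 :=
  zero_smul ℝ _

lemma continuous_eulerPrimitive (hk : 0 ≤ k) (hg : Continuous g) :
    Continuous (eulerPrimitive k g) := by
  refine continuous_id.smul ?_
  apply intervalIntegral.continuous_parametric_intervalIntegral_of_continuous'
  exact ((Real.continuous_rpow_const hk).comp continuous_snd).smul (by fun_prop)

lemma eulerPrimitive_of_pos (k : ℝ) (g : ℝ → E) (hs : 0 < s) :
    eulerPrimitive k g s = s ^ (-k) • ∫ σ in (0 : ℝ)..s, σ ^ k • g σ := by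
  have hscale : ∫ θ in (0 : ℝ)..1, (s * θ) ^ k • g (s * θ) =
      s ^ k • ∫ θ in (0 : ℝ)..1, θ ^ k • g (s * θ) := by
    rw [← intervalIntegral.integral_smul]
    refine intervalIntegral.integral_congr fun θ hθ => ?_
    rw [Set.uIcc_of_le zero_le_one] at hθ
    simp only [Real.mul_rpow hs.le hθ.1, mul_smul]
  have hsubst := intervalIntegral.smul_integral_comp_mul_left (a := 0) (b := 1)
    (fun σ : ℝ => σ ^ k • g σ) s
  rw [mul_zero, mul_one, hscale] at hsubst
  rw [← hsubst, smul_comm s, smul_smul, ← Real.rpow_add hs, neg_add_cancel, Real.rpow_zero,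
    one_smul, eulerPrimitive]

lemma hasDerivAt_eulerPrimitive [CompleteSpace E] (hk : 0 ≤ k) (hg : Continuous g) (hs : 0 < s) :
    HasDerivAt (eulerPrimitive k g) (g s - (k / s) • eulerPrimitive k g s) s := by
  have hcont : Continuous fun σ : ℝ => σ ^ k • g σ := (Real.continuous_rpow_const hk).smul hg
  have hderiv := (Real.hasDerivAt_rpow_const (p := -k) (Or.inl hs.ne')).smul
    (hcont.integral_hasStrictDerivAt 0 s).hasDerivAt
  have heq : eulerPrimitive k g =ᶠ[𝓝 s]
      fun r => r ^ (-k) • ∫ σ in (0 : ℝ)..r, σ ^ k • g σ :=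
    (eventually_gt_nhds hs).mono fun r hr => eulerPrimitive_of_pos k g hr
  refine (hderiv.congr_of_eventuallyEq heq).congr_deriv ?_
  rw [eulerPrimitive_of_pos k g hs, smul_smul, smul_smul, ← Real.rpow_add hs, neg_add_cancel,
    Real.rpow_zero, one_smul, Real.rpow_sub_one hs.ne', sub_eq_add_neg, ← neg_smul]
  ring_nf

lemma dist_eulerPrimitive_le (hk : 0 ≤ k) (hf : Continuous f) (hg : Continuous g) (hs : 0 ≤ s)
    {C : ℝ} (hC : ∀ σ ∈ Set.Icc 0 s, dist (f σ) (g σ) ≤ C) :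
    dist (eulerPrimitive k f s) (eulerPrimitive k g s) ≤ s * C := by
  have hinteg : ∀ {h : ℝ → E}, Continuous h →
      IntervalIntegrable (fun θ : ℝ => θ ^ k • h (s * θ)) MeasureTheory.volume 0 1 := fun hh =>
    ((Real.continuous_rpow_const hk).smul
      (hh.comp (continuous_const_mul s))).intervalIntegrable _ _
  have hbound : ‖∫ θ in (0 : ℝ)..1, (θ ^ k • f (s * θ) - θ ^ k • g (s * θ))‖ ≤
      C * |(1 : ℝ) - 0| := by
    refine intervalIntegral.norm_integral_le_of_norm_le_const fun θ hθ => ?_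
    rw [Set.uIoc_of_le zero_le_one] at hθ
    rw [← smul_sub, norm_smul, Real.norm_of_nonneg (Real.rpow_nonneg hθ.1.le k), ← dist_eq_norm]
    exact (mul_le_of_le_one_left dist_nonneg (Real.rpow_le_one hθ.1.le hθ.2 hk)).trans
      (hC _ ⟨mul_nonneg hs hθ.1.le, mul_le_of_le_one_right hs hθ.2⟩)
  rw [sub_zero, abs_one, mul_one] at hbound
  rw [eulerPrimitive, eulerPrimitive, dist_eq_norm, ← smul_sub,
    ← intervalIntegral.integral_sub (hinteg hf) (hinteg hg), norm_smul, Real.norm_of_nonneg hs]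
  exact mul_le_mul_of_nonneg_left hbound hs

end EulerPrimitive

section BriotBouquet

variable {ι E : Type*} [NormedAddCommGroup E] [NormedSpace ℝ E]
  {k : ι → ℝ} {g : ℝ × (ι → E) → ι → E} {v w : ℝ → ι → E}

/-- The Picard operator of the Briot–Bouquet problem `vᵢ' = gᵢ(s, v) - (kᵢ / s) (vᵢ - v₀ᵢ)`,
`v 0 = v₀`: its fixed points are the continuous solutions. -/
noncomputable def briotBouquetPicard (k : ι → ℝ) (g : ℝ × (ι → E) → ι → E) (v₀ : ι → E)
    (v : ℝ → ι → E) (s : ℝ) : ι → E :=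
  fun i => v₀ i + eulerPrimitive (k i) (fun σ => g (σ, v σ) i) s

lemma briotBouquetPicard_zero (k : ι → ℝ) (g : ℝ × (ι → E) → ι → E) (v₀ : ι → E)
    (v : ℝ → ι → E) : briotBouquetPicard k g v₀ v 0 = v₀ := by
  ext i
  rw [briotBouquetPicard, eulerPrimitive_zero, add_zero]

lemma continuous_briotBouquetPicard (hk : ∀ i, 0 ≤ k i) (hg : Continuous g) (v₀ : ι → E)
    (hv : Continuous v) : Continuous (briotBouquetPicard k g v₀ v) :=
  continuous_pi fun i =>
    continuous_const.add (continuous_eulerPrimitive (hk i) (by fun_prop))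

lemma hasDerivAt_briotBouquetPicard [CompleteSpace E] (hk : ∀ i, 0 ≤ k i) (hg : Continuous g)
    (v₀ : ι → E) (hv : Continuous v) {s : ℝ} (hs : 0 < s) (i : ι) :
    HasDerivAt (fun r => briotBouquetPicard k g v₀ v r i)
      (g (s, v s) i - (k i / s) • (briotBouquetPicard k g v₀ v s i - v₀ i)) s := by
  simpa only [briotBouquetPicard, add_sub_cancel_left] using
    (hasDerivAt_eulerPrimitive (g := fun σ => g (σ, v σ) i) (hk i) (by fun_prop) hs).const_add
      (v₀ i)

variable [Fintype ι]

lemma dist_briotBouquetPicard_le (hk : ∀ i, 0 ≤ k i) {K : NNReal} (hg : LipschitzWith K g)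
    (v₀ : ι → E) (hv : Continuous v) (hw : Continuous w) {s : ℝ} (hs : 0 ≤ s) {C : ℝ}
    (hC : ∀ σ ∈ Set.Icc 0 s, dist (v σ) (w σ) ≤ C) :
    dist (briotBouquetPicard k g v₀ v s) (briotBouquetPicard k g v₀ w s) ≤ s * (K * C) := by
  have hg' := hg.continuous
  have hC₀ : 0 ≤ C := dist_nonneg.trans (hC 0 ⟨le_rfl, hs⟩)
  refine (dist_pi_le_iff (by positivity)).2 fun i => ?_
  rw [briotBouquetPicard, briotBouquetPicard, dist_add_left]
  refine dist_eulerPrimitive_le (hk i) (by fun_prop) (by fun_prop) hs fun σ hσ => ?_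
  calc dist (g (σ, v σ) i) (g (σ, w σ) i)
      ≤ dist (g (σ, v σ)) (g (σ, w σ)) := dist_le_pi_dist _ _ i
    _ ≤ K * dist (σ, v σ) (σ, w σ) := hg.dist_le_mul _ _
    _ = K * dist (v σ) (w σ) := by rw [dist_prod_same_left]
    _ ≤ K * C := mul_le_mul_of_nonneg_left (hC σ hσ) K.coe_nonneg

variable [CompleteSpace E]

lemma exists_briotBouquetPicard_eqOn (hk : ∀ i, 0 ≤ k i) {K : NNReal} (hg : LipschitzWith K g)
    (v₀ : ι → E) {T : ℝ} (hT : 0 ≤ T) (hTK : T * K < 1) :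
    ∃ v, Continuous v ∧ Set.EqOn (briotBouquetPicard k g v₀ v) v (Set.Icc 0 T) := by
  let extend : C(Set.Icc 0 T, ι → E) → ℝ → ι → E := fun V => Set.IccExtend hT V
  have hextend : ∀ V, Continuous (extend V) := fun V => V.continuous.Icc_extend'
  let Φ : C(Set.Icc 0 T, ι → E) → C(Set.Icc 0 T, ι → E) := fun V =>
    ⟨fun s => briotBouquetPicard k g v₀ (extend V) s,
      (continuous_briotBouquetPicard hk hg.continuous v₀ (hextend V)).comp continuous_subtype_val⟩
  have hΦ : ContractingWith (Real.toNNReal (T * K)) Φ := by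
    refine ⟨by simpa using hTK, LipschitzWith.of_dist_le_mul fun V V' => ?_⟩
    rw [Real.coe_toNNReal _ (by positivity)]
    refine (ContinuousMap.dist_le (by positivity)).2 fun s => ?_
    calc dist (briotBouquetPicard k g v₀ (extend V) s) (briotBouquetPicard k g v₀ (extend V') s)
        ≤ s * (K * dist V V') :=
          dist_briotBouquetPicard_le hk hg v₀ (hextend V) (hextend V') s.2.1 fun _ _ =>
            ContinuousMap.dist_apply_le_dist _
      _ ≤ T * (K * dist V V') := mul_le_mul_of_nonneg_right s.2.2 (by positivity)
      _ = T * K * dist V V' := (mul_assoc _ _ _).symm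
  obtain ⟨V, hV, -⟩ := hΦ.exists_fixedPoint 0 (edist_ne_top _ _)
  refine ⟨extend V, hextend V, fun s hs => ?_⟩
  rw [show extend V s = V ⟨s, hs⟩ from Set.IccExtend_of_mem hT V hs]
  exact DFunLike.congr_fun hV ⟨s, hs⟩

lemma exists_hasDerivAt_briotBouquet_of_lipschitzWith (hk : ∀ i, 0 ≤ k i) {K : NNReal}
    (hg : LipschitzWith K g) (v₀ : ι → E) :
    ∃ T > 0, ∃ v : ℝ → ι → E, Continuous v ∧ v 0 = v₀ ∧ ∀ s ∈ Set.Ioo 0 T, ∀ i,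
      HasDerivAt (fun r => v r i) (g (s, v s) i - (k i / s) • (v s i - v₀ i)) s := by
  obtain ⟨T, hT, hTK⟩ : ∃ T : ℝ, 0 < T ∧ T * K < 1 :=
    ⟨1 / (K + 1), by positivity, by
      rw [one_div, inv_mul_lt_one₀ (by positivity)]; exact lt_add_one _⟩
  obtain ⟨v, hv, hfix⟩ := exists_briotBouquetPicard_eqOn hk hg v₀ hT.le hTK
  refine ⟨T, hT, v, hv, ?_, fun s hs i => ?_⟩
  · rw [← hfix ⟨le_rfl, hT.le⟩, briotBouquetPicard_zero]
  · have heq : (fun r => v r i) =ᶠ[𝓝 s] fun r => briotBouquetPicard k g v₀ v r i := by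
      filter_upwards [Ioo_mem_nhds hs.1 hs.2] with r hr
      rw [hfix ⟨hr.1.le, hr.2.le⟩]
    have hderiv := hasDerivAt_briotBouquetPicard hk hg.continuous v₀ hv hs.1 i
    rw [hfix ⟨hs.1.le, hs.2.le⟩] at hderiv
    exact hderiv.congr_of_eventuallyEq heq

end BriotBouquet

section PrescribedAsymptotics

variable {ι : Type*} [Fintype ι] {k : ι → ℝ} {v₀ : ι → ℝ}

lemma exists_hasDerivAt_briotBouquet_of_contDiffAt (hk : ∀ i, 0 ≤ k i)
    {G : ℝ × (ι → ℝ) → ι → ℝ} (hG : ContDiffAt ℝ 1 G (0, v₀)) :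
    ∃ v : ℝ → ι → ℝ, Continuous v ∧ v 0 = v₀ ∧ ∀ᶠ s in 𝓝[>] 0, ∀ i,
      HasDerivAt (fun r => v r i) (G (s, v s) i - k i / s * (v s i - v₀ i)) s := by
  obtain ⟨K, U, hU, hGU⟩ := hG.exists_lipschitzOnWith
  obtain ⟨g, hg, hGg⟩ := hGU.extend_pi
  obtain ⟨T, hT, v, hv, hv0, hderiv⟩ :=
    exists_hasDerivAt_briotBouquet_of_lipschitzWith hk hg v₀
  have hgraph : Tendsto (fun s => (s, v s)) (𝓝[>] 0) (𝓝 (0, v₀)) := by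
    rw [← hv0]
    exact ((continuous_id.prodMk hv).tendsto 0).mono_left nhdsWithin_le_nhds
  refine ⟨v, hv, hv0, ?_⟩
  filter_upwards [hgraph hU, Ioo_mem_nhdsGT hT] with s hsU hsT
  rw [hGg hsU]
  exact hderiv s hsT

lemma hasDerivAt_const_mul_exp_neg_mul (c l t : ℝ) :
    HasDerivAt (fun τ => c * Real.exp (-(l * τ))) (-l * (c * Real.exp (-(l * t)))) t :=
  (((hasDerivAt_const_mul l).fun_neg.exp).const_mul c).congr_deriv (by ring)

lemma tendsto_const_mul_exp_neg_mul_atTop (c : ℝ) {l : ℝ} (hl : 0 < l) :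
    Tendsto (fun t => c * Real.exp (-(l * t))) atTop (𝓝 0) := by
  simpa using (Real.tendsto_exp_neg_atTop_nhds_zero.comp
    (tendsto_id.const_mul_atTop hl)).const_mul c

lemma exists_exp_mul_le_of_posHomogeneous {V : Type*} [TopologicalSpace V] [SMul ℝ V] {F : V → ℝ}
    (hF : Continuous F) (hFsmul : ∀ c ≥ 0, ∀ x, F (c • x) = c * F x) {C : Set V}
    (hC : IsCompact C) {l s₀ : ℝ} (hs₀ : 0 ≤ s₀) {u v : ℝ → V}
    (huv : ∀ t, u t = (s₀ * Real.exp (-(l * t))) • v t) (hv : ∀ t ≥ 0, v t ∈ C) :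
    ∃ M : ℝ, ∀ t ≥ 0, Real.exp (l * t) * F (u t) ≤ M := by
  obtain ⟨M, hM⟩ := hC.bddAbove_image hF.continuousOn
  refine ⟨s₀ * M, fun t ht => ?_⟩
  calc Real.exp (l * t) * F (u t) = s₀ * F (v t) := by
        rw [huv, hFsmul _ (by positivity), Real.exp_neg]
        field_simp
    _ ≤ s₀ * M := mul_le_mul_of_nonneg_left (hM ⟨v t, hv t ht, rfl⟩) hs₀

/-- Second-order vanishing of `Q` at the origin is encoded by its blow-up
`G (s, v) = Q (s • v) / s²`, extended to `s = 0`. -/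
theorem exists_hasDerivAt_exp_smul_tendsto (hk : ∀ i, 0 ≤ k i) (hkv : ∀ i, k i * v₀ i = 0)
    {l : ℝ} (hl : 0 < l) {Q : (ι → ℝ) → ι → ℝ} {G : ℝ × (ι → ℝ) → ι → ℝ}
    (hQ : ∀ s v, Q (s • v) = s ^ 2 • G (s, v)) (hG : ContDiffAt ℝ 1 G (0, v₀))
    {N : Set (ι → ℝ)} (hN : N ∈ 𝓝 v₀) :
    ∃ s₀ > 0, ∃ u v : ℝ → ι → ℝ, (∀ t, u t = (s₀ * Real.exp (-(l * t))) • v t) ∧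
      (∀ t ≥ 0, v t ∈ N) ∧ Tendsto v atTop (𝓝 v₀) ∧
      ∀ t ≥ 0, ∀ i, HasDerivAt (fun τ => u τ i) (l * (k i - 1) * u t i + Q (u t) i) t := by
  obtain ⟨v, hv, hv0, hderiv⟩ := exists_hasDerivAt_briotBouquet_of_contDiffAt hk
    (G := fun p => -l⁻¹ • G p) (hG.const_smul (-l⁻¹))
  have hvlim : Tendsto v (𝓝 0) (𝓝 v₀) := hv0 ▸ hv.tendsto 0
  obtain ⟨s₀, hs₀, hgood⟩ := mem_nhdsGT_iff_exists_Ioc_subset.1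
    (hderiv.and (nhdsWithin_le_nhds (hvlim.eventually hN)))
  let σ : ℝ → ℝ := fun t => s₀ * Real.exp (-(l * t))
  have hσ : ∀ t ≥ 0, σ t ∈ Set.Ioc 0 s₀ := fun t ht =>
    ⟨mul_pos hs₀ (Real.exp_pos _), mul_le_of_le_one_right hs₀.le
      (Real.exp_le_one_iff.2 (neg_nonpos.2 (mul_nonneg hl.le ht)))⟩
  refine ⟨s₀, hs₀, fun t => σ t • v (σ t), fun t => v (σ t), fun t => rfl,
    fun t ht => (hgood (hσ t ht)).2,
    hvlim.comp (tendsto_const_mul_exp_neg_mul_atTop s₀ hl), fun t ht i => ?_⟩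
  have hσ' : HasDerivAt σ (-l * σ t) t := hasDerivAt_const_mul_exp_neg_mul s₀ l t
  refine (hσ'.mul (((hgood (hσ t ht)).1 i).comp t hσ')).congr_deriv ?_
  have hσ₀ : σ t ≠ 0 := (hσ t ht).1.ne'
  simp only [hQ, Pi.smul_apply, smul_eq_mul, Function.comp_apply]
  field_simp
  linear_combination (-l) * hkv i

end PrescribedAsymptotics

section System

variable {δ p r a : ℝ}

/-- `(X, Y, Z, W)` solves on `[0, ∞)` the system (★★) in which `d`, `A₂ / d`, `2 A₃ / d` and `A₃`
are replaced by arbitrary coefficients `δ`, `p`, `r` and `a`. -/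
def IsSolution (δ p r a : ℝ) (X Y Z W : ℝ → ℝ) : Prop :=
  ∀ t ∈ Set.Ici (0 : ℝ),
    HasDerivWithinAt X
      (-(X t) * (δ * X t ^ 2 + Z t ^ 2 - 2 * Z t) - p * Y t + r * W t ^ 2) (Set.Ici 0) t ∧
    HasDerivWithinAt Y
      (-2 * Y t * (δ * X t ^ 2 - X t + Z t ^ 2 - 2 * Z t + 1)) (Set.Ici 0) t ∧
    HasDerivWithinAt Z
      (-(Z t) * (δ * X t ^ 2 + Z t ^ 2 - 3 * Z t + 2) + δ * X t ^ 2 + a * W t ^ 2)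
      (Set.Ici 0) t ∧
    HasDerivWithinAt W
      (-(W t) * (δ * X t ^ 2 - 2 * X t + Z t ^ 2 - 3 * Z t + 2)) (Set.Ici 0) t

/-- The blow-up `Q (s • v) / s²` of the nonlinear part `Q` of the system in the coordinates
`v = (X - (p / 2) Y, Y, Z, W)`; the value at `s = 1` is `Q` itself. -/
noncomputable def blowUp (δ p r a : ℝ) : ℝ × (Fin 4 → ℝ) → Fin 4 → ℝ := fun (s, v) =>
  let x := v 0 + p / 2 * v 1
  let S := s * (δ * x ^ 2 + v 2 ^ 2)
  ![-x * (S - 2 * v 2) + r * v 3 ^ 2 + p * v 1 * (S - x - 2 * v 2),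
    -2 * v 1 * (S - x - 2 * v 2),
    -v 2 * (S - 3 * v 2) + δ * x ^ 2 + a * v 3 ^ 2,
    -v 3 * (S - 2 * x - 3 * v 2)]

lemma contDiff_blowUp : ContDiff ℝ 1 (blowUp δ p r a) := by
  refine contDiff_pi.2 fun i => ?_
  fin_cases i <;>
    simp only [blowUp, Fin.zero_eta, Fin.mk_one, Fin.reduceFinMk, Matrix.cons_val] <;> fun_prop

lemma blowUp_one_smul (s : ℝ) (v : Fin 4 → ℝ) :
    blowUp δ p r a (1, s • v) = s ^ 2 • blowUp δ p r a (s, v) := by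
  ext i
  fin_cases i <;>
    simp only [blowUp, Fin.zero_eta, Fin.mk_one, Fin.reduceFinMk, Matrix.cons_val, Pi.smul_apply,
      smul_eq_mul] <;> ring

lemma isSolution_of_hasDerivAt_blowUp {u : ℝ → Fin 4 → ℝ}
    (hu : ∀ t ≥ 0, ∀ i, HasDerivAt (fun τ => u τ i)
      (2 * ((![1, 0, 0, 0] : Fin 4 → ℝ) i - 1) * u t i + blowUp δ p r a (1, u t) i) t) :
    IsSolution δ p r a (fun t => u t 0 + p / 2 * u t 1) (fun t => u t 1) (fun t => u t 2)
      (fun t => u t 3) := by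
  refine fun t ht => ⟨?_, ?_, ?_, ?_⟩
  · refine ((hu t ht 0).add ((hu t ht 1).const_mul (p / 2))).hasDerivWithinAt.congr_deriv ?_
    simp only [blowUp, Matrix.cons_val]
    ring
  · refine (hu t ht 1).hasDerivWithinAt.congr_deriv ?_
    simp only [blowUp, Matrix.cons_val]
    ring
  · refine (hu t ht 2).hasDerivWithinAt.congr_deriv ?_
    simp only [blowUp, Matrix.cons_val]
    ring
  · refine (hu t ht 3).hasDerivWithinAt.congr_deriv ?_
    simp only [blowUp, Matrix.cons_val]
    ring

theorem stmt5_general (δ p r a α β : ℝ) :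
    ∃ X Y Z W : ℝ → ℝ, IsSolution δ p r a X Y Z W ∧
      (∀ t ≥ (0 : ℝ), 0 < Y t) ∧
      (∃ M : ℝ, ∀ t ≥ (0 : ℝ), Real.exp (2 * t) * (|X t| + |Y t| + |Z t| + |W t|) ≤ M) ∧
      Tendsto X atTop (𝓝 0) ∧ Tendsto Y atTop (𝓝 0) ∧
      Tendsto Z atTop (𝓝 0) ∧ Tendsto W atTop (𝓝 0) ∧
      Tendsto (fun t => Z t / Y t) atTop (𝓝 α) ∧
      Tendsto (fun t => W t / Y t) atTop (𝓝 β) := by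
  let v₀ : Fin 4 → ℝ := ![0, 1, α, β]
  let k : Fin 4 → ℝ := ![1, 0, 0, 0]
  have hk : ∀ i, 0 ≤ k i := fun i => by fin_cases i <;> simp [k]
  have hkv : ∀ i, k i * v₀ i = 0 := fun i => by fin_cases i <;> simp [k, v₀]
  obtain ⟨s₀, hs₀, u, v, huv, hball, hv, hode⟩ := exists_hasDerivAt_exp_smul_tendsto hk hkv
    two_pos (Q := fun u => blowUp δ p r a (1, u)) blowUp_one_smul contDiff_blowUp.contDiffAt
    (Metric.closedBall_mem_nhds v₀ one_half_pos)
  have hvi : ∀ i, Tendsto (fun t => v t i) atTop (𝓝 (v₀ i)) := tendsto_pi_nhds.1 hv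
  have hu : ∀ i, Tendsto (fun t => u t i) atTop (𝓝 0) := fun i => by
    simpa [huv] using (tendsto_const_mul_exp_neg_mul_atTop s₀ two_pos).mul (hvi i)
  have hpos : ∀ t ≥ 0, 0 < u t 1 := fun t ht => by
    have hdist : |v t 1 - 1| ≤ 1 / 2 := (dist_le_pi_dist (v t) v₀ 1).trans (hball t ht)
    rw [huv]
    exact mul_pos (mul_pos hs₀ (Real.exp_pos _)) (by linarith [(abs_le.1 hdist).1])
  have hratio : ∀ i, Tendsto (fun t => u t i / u t 1) atTop (𝓝 (v₀ i)) := fun i => by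
    have hquot := (hvi i).div (hvi 1) (by simp [v₀])
    simpa [huv, v₀, mul_div_mul_left, hs₀.ne', Pi.div_def] using hquot
  refine ⟨_, _, _, _, isSolution_of_hasDerivAt_blowUp hode, hpos, ?_, ?_, hu 1, hu 2, hu 3,
    hratio 2, hratio 3⟩
  · let F : (Fin 4 → ℝ) → ℝ := fun x => |x 0 + p / 2 * x 1| + |x 1| + |x 2| + |x 3|
    have hFsmul : ∀ c ≥ 0, ∀ x, F (c • x) = c * F x := fun c hc x => by
      simp only [F, Pi.smul_apply, smul_eq_mul, mul_left_comm _ c, ← mul_add, abs_mul,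
        abs_of_nonneg hc]
    exact exists_exp_mul_le_of_posHomogeneous (F := F) (by fun_prop) hFsmul
      (isCompact_closedBall v₀ (1 / 2)) hs₀.le huv hball
  · simpa using (hu 0).add ((hu 1).const_mul (p / 2))

end System

/-- For all `α, β ∈ ℝ` there is a solution `(X, Ỹ, Z̃, W)` of the system (★★) on `[0,∞)`
with `Ỹ > 0`, `sup_{t ≥ 0} e^{2t}|(X,Ỹ,Z̃,W)(t)| < ∞` (in particular the solution tends
to `(0,0,0,0)`), `Z̃/Ỹ → α` and `W/Ỹ → β` as `t → ∞`. -/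
theorem stmt5 (d : ℕ) (hd : 2 ≤ d) (q : ℝ) (α β : ℝ) :
    ∃ X Yt Zt W : ℝ → ℝ,
      (∀ t ∈ Set.Ici (0:ℝ),
        HasDerivWithinAt X
          (-(X t) * ((d : ℝ) * X t^2 + Zt t^2 - 2*Zt t) - (A2 d / (d : ℝ)) * Yt t
            + (2 * A3 d q / (d : ℝ)) * W t^2) (Set.Ici 0) t ∧
        HasDerivWithinAt Yt
          (-2 * Yt t * ((d : ℝ) * X t^2 - X t + Zt t^2 - 2*Zt t + 1)) (Set.Ici 0) t ∧
        HasDerivWithinAt Zt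
          (-(Zt t) * ((d : ℝ) * X t^2 + Zt t^2 - 3*Zt t + 2) + (d : ℝ) * X t^2
            + A3 d q * W t^2) (Set.Ici 0) t ∧
        HasDerivWithinAt W
          (-(W t) * ((d : ℝ) * X t^2 - 2*X t + Zt t^2 - 3*Zt t + 2)) (Set.Ici 0) t) ∧
      (∀ t ≥ (0:ℝ), 0 < Yt t) ∧
      (∃ M : ℝ, ∀ t ≥ (0:ℝ),
        Real.exp (2*t) * (|X t| + |Yt t| + |Zt t| + |W t|) ≤ M) ∧
      Tendsto X atTop (𝓝 0) ∧ Tendsto Yt atTop (𝓝 0) ∧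
      Tendsto Zt atTop (𝓝 0) ∧ Tendsto W atTop (𝓝 0) ∧
      Tendsto (fun t => Zt t / Yt t) atTop (𝓝 α) ∧
      Tendsto (fun t => W t / Yt t) atTop (𝓝 β) :=
  stmt5_general d (A2 d / d) (2 * A3 d q / d) (A3 d q) α β
end

section
/- For every real number γ there exists a solution (X, Y, Z, W) of the system (★) defined on an interval containing (−∞, 0] such that: (1) Y(t) > 0 for all t; (2) e^{−2t}·(|X(t)| + |Z(t) − 1| + |W(t)|) remains bounded as t → −∞; (3) e^{−t}·|Y(t)| remains bounded as t → −∞; (4) lim_{t→−∞} W(t)/Y(t)² = 1; and (5) lim_{t→−∞} (1 − Z(t))/Y(t)² = γ. -/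
open Filter Topology

/-!
Put `σ = r² e^{2t}`, `X = σ x`, `Y² = σ y²`, `Z = 1 + σ ζ`, `W = σ w`. As functions of `σ`, the
profiles `y`, `ζ`, `w` satisfy regular equations, while that of `x` is singular at `σ = 0`:
`σ x' + x = (α / 2) y² + O(σ)`. The substitution `x = p + (α / 2) y²` turns it into
`(σ p)' = σ P` with `P` smooth, and the whole system is then equivalent to a fixed-point equation
`v σ = v₀ + σ ∫₀¹ D θ F(σ θ, v (σ θ)) dθ` with `D` bounded, whose right-hand side contracts for
small `σ`. The values `-γ` of `ζ` and `ω` of `w` at `σ = 0` are free, which gives the two limits.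
-/

section SingularIntegralEquation

open Set Metric

theorem exists_closedBall_lipschitzOnWith_norm_le {α E : Type*} [PseudoMetricSpace α]
    [SeminormedAddCommGroup E] {f : α → E} (hf : LocallyLipschitz f) (a : α) :
    ∃ r > 0, ∃ (K : NNReal) (M : ℝ), LipschitzOnWith K f (closedBall a r) ∧
      ∀ z ∈ closedBall a r, ‖f z‖ ≤ M := by
  obtain ⟨K, T, hT, hK⟩ := hf a
  have hbound : ∀ᶠ z in 𝓝 a, ‖f z‖ < ‖f a‖ + 1 :=
    hf.continuous.norm.continuousAt.eventually_lt_const (lt_add_one _)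
  obtain ⟨r, hr, hsub⟩ := nhds_basis_closedBall.mem_iff.1 (inter_mem hT hbound)
  exact ⟨r, hr, K, ‖f a‖ + 1, hK.mono fun z hz => (hsub hz).1, fun z hz => (hsub hz).2.le⟩

theorem mk_IccExtend_mem_closedBall {E : Type*} [PseudoMetricSpace E] {r ε σ : ℝ} {v₀ : E}
    (hε : 0 ≤ ε) (hεr : ε ≤ r) {v : C(Icc 0 ε, E)}
    (hv : v ∈ closedBall (ContinuousMap.const _ v₀) r) (hσ : σ ∈ Icc 0 ε) :
    ∀ θ ∈ Icc (0 : ℝ) 1, (σ * θ, IccExtend hε v (σ * θ)) ∈ closedBall ((0 : ℝ), v₀) r := by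
  intro θ hθ
  have hσθ : 0 ≤ σ * θ := mul_nonneg hσ.1 hθ.1
  rw [← closedBall_prod_same]
  refine ⟨?_, (ContinuousMap.dist_le (hε.trans hεr)).1 hv _⟩
  rw [mem_closedBall, dist_zero_right, Real.norm_of_nonneg hσθ]
  exact (mul_le_of_le_one_right hσ.1 hθ.2).trans (hσ.2.trans hεr)

variable {E : Type*} [NormedAddCommGroup E] [NormedSpace ℝ E]
  {D : ℝ → E →L[ℝ] E} {F : ℝ × E → E} {v w : ℝ → E} {K : NNReal} {C M σ η r ε : ℝ}

/-- The operator `v ↦ ∫₀¹ D θ F(σ θ, v (σ θ)) dθ` of a singular initial value problem at `σ = 0`.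
For `D = 1` it is the mean of `F(s, v s)` over `[0, σ]`, as in Picard iteration. -/
noncomputable def dilationIntegral (D : ℝ → E →L[ℝ] E) (F : ℝ × E → E) (v : ℝ → E) (σ : ℝ) : E :=
  ∫ θ in (0 : ℝ)..1, D θ (F (σ * θ, v (σ * θ)))

theorem continuous_dilationIntegral (hD : Continuous D) (hF : Continuous F) (hv : Continuous v) :
    Continuous (dilationIntegral D F v) :=
  intervalIntegral.continuous_parametric_intervalIntegral_of_continuous'
    (by simp only [Function.uncurry_def]; fun_prop) 0 1

theorem norm_integral_zero_one_le {f : ℝ → E} (h : ∀ θ ∈ Icc (0 : ℝ) 1, ‖f θ‖ ≤ M) :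
    ‖∫ θ in (0 : ℝ)..1, f θ‖ ≤ M := by
  have hM : ∀ θ ∈ uIoc (0 : ℝ) 1, ‖f θ‖ ≤ M := fun θ hθ =>
    h θ (Ioc_subset_Icc_self (uIoc_of_le (zero_le_one' ℝ) ▸ hθ))
  simpa using intervalIntegral.norm_integral_le_of_norm_le_const hM

theorem norm_dilationIntegral_le (hC : ∀ θ ∈ Icc (0 : ℝ) 1, ‖D θ‖ ≤ C)
    (hM : ∀ θ ∈ Icc (0 : ℝ) 1, ‖F (σ * θ, v (σ * θ))‖ ≤ M) :
    ‖dilationIntegral D F v σ‖ ≤ C * M :=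
  norm_integral_zero_one_le fun θ hθ => (D θ).le_of_opNorm_le_of_le (hC θ hθ) (hM θ hθ)

theorem norm_dilationIntegral_sub_le (hD : Continuous D) (hF : Continuous F) (hv : Continuous v)
    (hw : Continuous w) (hC : ∀ θ ∈ Icc (0 : ℝ) 1, ‖D θ‖ ≤ C) {S : Set (ℝ × E)}
    (hK : LipschitzOnWith K F S) (hvS : ∀ θ ∈ Icc (0 : ℝ) 1, (σ * θ, v (σ * θ)) ∈ S)
    (hwS : ∀ θ ∈ Icc (0 : ℝ) 1, (σ * θ, w (σ * θ)) ∈ S)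
    (hvw : ∀ θ ∈ Icc (0 : ℝ) 1, dist (v (σ * θ)) (w (σ * θ)) ≤ η) :
    ‖dilationIntegral D F v σ - dilationIntegral D F w σ‖ ≤ C * (K * η) := by
  rw [dilationIntegral, dilationIntegral, ← intervalIntegral.integral_sub
    (Continuous.intervalIntegrable (by fun_prop) _ _)
    (Continuous.intervalIntegrable (by fun_prop) _ _)]
  refine norm_integral_zero_one_le fun θ hθ => ?_
  rw [← map_sub]
  refine (D θ).le_of_opNorm_le_of_le (hC θ hθ) ?_
  calc ‖F (σ * θ, v (σ * θ)) - F (σ * θ, w (σ * θ))‖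
      ≤ K * dist (σ * θ, v (σ * θ)) (σ * θ, w (σ * θ)) := by
        rw [← dist_eq_norm]
        exact hK.dist_le_mul _ (hvS θ hθ) _ (hwS θ hθ)
    _ ≤ K * η := by
        rw [dist_prod_same_left]
        gcongr
        exact hvw θ hθ

/-- The map `v ↦ v₀ + σ ∫₀¹ D θ F(σ θ, v (σ θ)) dθ` on `C([0, ε], E)`, to which Banach's
fixed-point theorem is applied. -/
noncomputable def singularPicard (hD : Continuous D) (hF : Continuous F) (hε : 0 ≤ ε) (v₀ : E)
    (v : C(Icc 0 ε, E)) : C(Icc 0 ε, E) where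
  toFun σ := v₀ + (σ : ℝ) • dilationIntegral D F (IccExtend hε v) σ
  continuous_toFun := by
    have := continuous_dilationIntegral hD hF (v.continuous.Icc_extend' (h := hε))
    fun_prop

theorem mapsTo_singularPicard_closedBall (hD : Continuous D) (hF : Continuous F) (hε : 0 ≤ ε)
    {v₀ : E} (hC : ∀ θ ∈ Icc (0 : ℝ) 1, ‖D θ‖ ≤ C)
    (hM : ∀ z ∈ closedBall ((0 : ℝ), v₀) r, ‖F z‖ ≤ M) (hεr : ε ≤ r) (hεM : ε * (C * M) ≤ r) :
    MapsTo (singularPicard hD hF hε v₀) (closedBall (ContinuousMap.const _ v₀) r)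
      (closedBall (ContinuousMap.const _ v₀) r) := by
  intro v hv
  refine (ContinuousMap.dist_le (hε.trans hεr)).2 fun σ => ?_
  have hint : ‖dilationIntegral D F (IccExtend hε v) σ‖ ≤ C * M :=
    norm_dilationIntegral_le hC fun θ hθ =>
      hM _ (mk_IccExtend_mem_closedBall hε hεr hv σ.2 θ hθ)
  calc dist (singularPicard hD hF hε v₀ v σ) v₀
      = σ * ‖dilationIntegral D F (IccExtend hε v) σ‖ := by
        simp [singularPicard, norm_smul, abs_of_nonneg σ.2.1]
    _ ≤ ε * (C * M) := mul_le_mul σ.2.2 hint (norm_nonneg _) hε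
    _ ≤ r := hεM

theorem dist_singularPicard_le (hD : Continuous D) (hF : Continuous F) (hε : 0 ≤ ε) {v₀ : E}
    (hC : ∀ θ ∈ Icc (0 : ℝ) 1, ‖D θ‖ ≤ C)
    (hK : LipschitzOnWith K F (closedBall ((0 : ℝ), v₀) r)) (hεr : ε ≤ r)
    {v w : C(Icc 0 ε, E)} (hv : v ∈ closedBall (ContinuousMap.const _ v₀) r)
    (hw : w ∈ closedBall (ContinuousMap.const _ v₀) r) :
    dist (singularPicard hD hF hε v₀ v) (singularPicard hD hF hε v₀ w) ≤
      ε * (C * K) * dist v w := by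
  have hC0 : 0 ≤ C := (norm_nonneg _).trans (hC 0 (left_mem_Icc.2 zero_le_one))
  refine (ContinuousMap.dist_le (by positivity)).2 fun σ => ?_
  have hint := norm_dilationIntegral_sub_le hD hF (v.continuous.Icc_extend' (h := hε))
    (w.continuous.Icc_extend' (h := hε)) hC hK (mk_IccExtend_mem_closedBall hε hεr hv σ.2)
    (mk_IccExtend_mem_closedBall hε hεr hw σ.2)
    fun θ _ => ContinuousMap.dist_apply_le_dist (f := v) (g := w) (projIcc 0 ε hε (σ * θ))
  calc dist (singularPicard hD hF hε v₀ v σ) (singularPicard hD hF hε v₀ w σ)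
      = σ * ‖dilationIntegral D F (IccExtend hε v) σ
          - dilationIntegral D F (IccExtend hε w) σ‖ := by
        simp [singularPicard, dist_eq_norm, ← smul_sub, norm_smul, abs_of_nonneg σ.2.1]
    _ ≤ ε * (C * (K * dist v w)) := mul_le_mul σ.2.2 hint (norm_nonneg _) hε
    _ = ε * (C * K) * dist v w := by ring

theorem exists_eq_add_smul_dilationIntegral [CompleteSpace E] (hD : Continuous D)
    (hF : LocallyLipschitz F) (v₀ : E) :
    ∃ ε > 0, ∃ v : ℝ → E, Continuous v ∧
      ∀ σ ∈ Icc 0 ε, v σ = v₀ + σ • dilationIntegral D F v σ := by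
  obtain ⟨r, hr, K, M, hK, hM⟩ := exists_closedBall_lipschitzOnWith_norm_le hF ((0 : ℝ), v₀)
  obtain ⟨C, hC⟩ := isCompact_Icc.exists_bound_of_continuousOn (hD.continuousOn (s := Icc 0 1))
  have hsmall (B : ℝ) {b : ℝ} (hb : 0 < b) : ∀ᶠ ε in 𝓝[>] (0 : ℝ), ε * B < b :=
    ((continuous_mul_const B).continuousAt.eventually_lt_const
      (by simpa using hb)).filter_mono nhdsWithin_le_nhds
  obtain ⟨ε, hε, hεr, hεM, hεK⟩ := (eventually_mem_nhdsWithin.and <| (hsmall 1 hr).and <|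
    (hsmall (C * M) hr).and (hsmall (C * K) one_half_pos)).exists
  rw [mul_one] at hεr
  replace hε : 0 < ε := hε
  let Φ := singularPicard hD hF.continuous hε.le v₀
  let S := closedBall (ContinuousMap.const (Icc 0 ε) v₀) r
  have hmaps : MapsTo Φ S S :=
    mapsTo_singularPicard_closedBall hD hF.continuous hε.le hC hM hεr.le hεM.le
  have hcontr : ContractingWith (1 / 2) (hmaps.restrict Φ S S) := by
    refine ⟨by rw [← NNReal.coe_lt_coe]; norm_num, LipschitzWith.of_dist_le_mul fun v w => ?_⟩
    refine (dist_singularPicard_le hD hF.continuous hε.le hC hK hεr.le v.2 w.2).trans ?_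
    exact mul_le_mul_of_nonneg_right (by simpa using hεK.le) dist_nonneg
  obtain ⟨v, -, hv, -⟩ := hcontr.exists_fixedPoint' isClosed_closedBall.isComplete hmaps
    (mem_closedBall_self hr.le) (edist_ne_top _ _)
  refine ⟨ε, hε, IccExtend hε.le v, v.continuous.Icc_extend', fun σ hσ => ?_⟩
  rw [IccExtend_of_mem hε.le v hσ]
  exact (DFunLike.congr_fun hv ⟨σ, hσ⟩).symm

end SingularIntegralEquation

section SingularODE

open Set

theorem pow_mul_self_mul_integral_dilation (k : ℕ) (f : ℝ → ℝ) (σ : ℝ) :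
    σ ^ k * (σ * ∫ θ in (0 : ℝ)..1, θ ^ k * f (σ * θ)) = ∫ s in (0 : ℝ)..σ, s ^ k * f s := by
  have h := intervalIntegral.smul_integral_comp_mul_left (fun s => s ^ k * f s)
    (a := 0) (b := 1) σ
  simp only [mul_zero, mul_one, smul_eq_mul, mul_pow, mul_assoc] at h
  rw [← h, intervalIntegral.integral_const_mul, mul_left_comm]

variable {ι : Type*}

/-- The diagonal operator `x ↦ (θ ^ kᵢ xᵢ)ᵢ` on `ℝ^ι`. -/
noncomputable def diagonalPow (k : ι → ℕ) (θ : ℝ) : (ι → ℝ) →L[ℝ] (ι → ℝ) :=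
  ContinuousLinearMap.pi fun i => θ ^ k i • ContinuousLinearMap.proj i

theorem diagonalPow_apply (k : ι → ℕ) (θ : ℝ) (x : ι → ℝ) (i : ι) :
    diagonalPow k θ x i = θ ^ k i * x i := by
  simp [diagonalPow]

theorem continuous_diagonalPow [Finite ι] (k : ι → ℕ) : Continuous (diagonalPow k) := by
  have := Fintype.ofFinite ι
  refine continuous_clm_apply.2 fun x => continuous_pi fun i => ?_
  simp only [diagonalPow_apply]
  fun_prop

theorem dilationIntegral_diagonalPow_apply [Fintype ι] (k : ι → ℕ) {F : ℝ × (ι → ℝ) → ι → ℝ}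
    (hF : Continuous F) {v : ℝ → ι → ℝ} (hv : Continuous v) (σ : ℝ) (i : ι) :
    dilationIntegral (diagonalPow k) F v σ i =
      ∫ θ in (0 : ℝ)..1, θ ^ k i * F (σ * θ, v (σ * θ)) i := by
  have hk := continuous_diagonalPow k
  have hint : IntervalIntegrable (fun θ => diagonalPow k θ (F (σ * θ, v (σ * θ))))
      MeasureTheory.volume 0 1 := Continuous.intervalIntegrable (by fun_prop) _ _
  have h := (ContinuousLinearMap.proj (R := ℝ) (φ := fun _ : ι => ℝ) i).intervalIntegral_comp_comm
    hint
  simp only [ContinuousLinearMap.proj_apply, diagonalPow_apply] at h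
  exact h.symm

theorem exists_hasDerivAt_pow_mul_sub [Fintype ι] (k : ι → ℕ) {F : ℝ × (ι → ℝ) → ι → ℝ}
    (hF : LocallyLipschitz F) (v₀ : ι → ℝ) :
    ∃ ε > 0, ∃ v : ℝ → ι → ℝ, Continuous v ∧ v 0 = v₀ ∧ ∀ σ ∈ Ioo 0 ε, ∀ i,
      HasDerivAt (fun s => s ^ k i * (v s i - v₀ i)) (σ ^ k i * F (σ, v σ) i) σ := by
  obtain ⟨ε, hε, v, hv, heq⟩ :=
    exists_eq_add_smul_dilationIntegral (continuous_diagonalPow k) hF v₀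
  refine ⟨ε, hε, v, hv, by simpa using heq 0 (left_mem_Icc.2 hε.le), fun σ hσ i => ?_⟩
  have hFc := hF.continuous
  have hcont : Continuous fun s => s ^ k i * F (s, v s) i := by fun_prop
  have hprim : ∀ s ∈ Ioo 0 ε,
      s ^ k i * (v s i - v₀ i) = ∫ x in (0 : ℝ)..s, x ^ k i * F (x, v x) i := by
    intro s hs
    rw [← pow_mul_self_mul_integral_dilation, ← dilationIntegral_diagonalPow_apply k hFc hv]
    conv_lhs => rw [heq s (Ioo_subset_Icc_self hs)]
    simp
  exact (hcont.integral_hasStrictDerivAt 0 σ).hasDerivAt.congr_of_eventuallyEq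
    (eventually_of_mem (Ioo_mem_nhds hσ.1 hσ.2) hprim)

end SingularODE

section StarSystem

open Set

variable {δ α β κ ε : ℝ} {x y ζ w : ℝ → ℝ}

/-- `(X, Y, Z, W)` solves on `s` the system (★) with arbitrary real coefficients:
`δ`, `α`, `β`, `κ` stand for `d`, `A₂ / d`, `2 A₃ / d`, `A₃`. -/
def IsStarSolutionOn (δ α β κ : ℝ) (s : Set ℝ) (X Y Z W : ℝ → ℝ) : Prop :=
  ∀ t ∈ s,
    HasDerivWithinAt X
      (X t * (δ * X t ^ 2 + Z t ^ 2 - 1) + α * Y t ^ 2 - β * W t ^ 2) s t ∧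
    HasDerivWithinAt Y (Y t * (δ * X t ^ 2 + Z t ^ 2 - X t)) s t ∧
    HasDerivWithinAt Z (Z t * (δ * X t ^ 2 + Z t ^ 2 - 1) + κ * W t ^ 2) s t ∧
    HasDerivWithinAt W (W t * (δ * X t ^ 2 + Z t ^ 2 - 2 * X t + Z t)) s t

/-- The quotient `(δ X² + Z² - 1) / σ` for `X = σ x` and `Z = 1 + σ ζ`. -/
def reducedRate (δ σ x ζ : ℝ) : ℝ := δ * σ * x ^ 2 + 2 * ζ + σ * ζ ^ 2

/-- The system (★) for the profiles `x`, `y`, `ζ`, `w`, where `X = σ x`, `Y² = σ y²`,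
`Z = 1 + σ ζ`, `W = σ w`, in the variable `σ` with `dσ/dt = 2 σ`, on `0 < σ < ε`. -/
def IsProfile (δ α β κ ε : ℝ) (x y ζ w : ℝ → ℝ) : Prop :=
  ∀ σ ∈ Ioo 0 ε,
    HasDerivAt (fun σ => σ * x σ)
      ((σ * (x σ * reducedRate δ σ (x σ) (ζ σ) - β * w σ ^ 2) + α * y σ ^ 2) / 2) σ ∧
    HasDerivAt y (y σ * (reducedRate δ σ (x σ) (ζ σ) - x σ) / 2) σ ∧
    HasDerivAt ζ ((δ * x σ ^ 2 + ζ σ ^ 2 + ζ σ * reducedRate δ σ (x σ) (ζ σ) + κ * w σ ^ 2) / 2)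
      σ ∧
    HasDerivAt w (w σ * (reducedRate δ σ (x σ) (ζ σ) - 2 * x σ + ζ σ) / 2) σ

theorem IsProfile.isStarSolutionOn (h : IsProfile δ α β κ ε x y ζ w) {e : ℝ → ℝ} {s : Set ℝ}
    (he : ∀ t ∈ s, HasDerivAt e (e t) t) (hes : ∀ t ∈ s, e t ^ 2 ∈ Ioo 0 ε) :
    IsStarSolutionOn δ α β κ s (fun t => e t ^ 2 * x (e t ^ 2)) (fun t => e t * y (e t ^ 2))
      (fun t => 1 + e t ^ 2 * ζ (e t ^ 2)) (fun t => e t ^ 2 * w (e t ^ 2)) := by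
  intro t ht
  have hσ : HasDerivAt (fun t => e t ^ 2) (2 * e t ^ 2) t :=
    ((he t ht).pow 2).congr_deriv (by ring)
  obtain ⟨hx, hy, hζ, hw⟩ := h _ (hes t ht)
  have hX : HasDerivAt (fun t => e t ^ 2 * x (e t ^ 2)) _ t :=
    HasDerivAt.comp (h₂ := fun σ => σ * x σ) t hx hσ
  refine ⟨(hX.congr_deriv ?_).hasDerivWithinAt,
    (((he t ht).mul (hy.comp t hσ)).congr_deriv ?_).hasDerivWithinAt,
    (((hσ.mul (hζ.comp t hσ)).const_add 1).congr_deriv ?_).hasDerivWithinAt,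
    ((hσ.mul (hw.comp t hσ)).congr_deriv ?_).hasDerivWithinAt⟩
  all_goals
    simp only [reducedRate, Function.comp_apply]
    ring

/-- The profile `x = p + (α / 2) y²` in terms of `v = (p, y, ζ, w)`. -/
noncomputable def profileX (α : ℝ) (v : Fin 4 → ℝ) : ℝ := v 0 + α / 2 * v 1 ^ 2

/-- The right-hand side `(P, Q)` of `(σ p)' = σ P`, `(y, ζ, w)' = Q`, which is the profile system
in the unknowns `v = (p, y, ζ, w)`. -/
noncomputable def profileField (δ α β κ : ℝ) (z : ℝ × (Fin 4 → ℝ)) : Fin 4 → ℝ :=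
  let v := z.2
  let x := profileX α v
  let g := reducedRate δ z.1 x (v 2)
  ![(x * g - β * v 3 ^ 2 - α * v 1 ^ 2 * (g - x)) / 2,
    v 1 * (g - x) / 2,
    (δ * x ^ 2 + v 2 ^ 2 + v 2 * g + κ * v 3 ^ 2) / 2,
    v 3 * (g - 2 * x + v 2) / 2]

theorem locallyLipschitz_profileField (δ α β κ : ℝ) :
    LocallyLipschitz (profileField δ α β κ) := by
  refine ContDiff.locallyLipschitz (𝕂 := ℝ) (contDiff_pi.2 fun i => ?_)
  fin_cases i <;> simp only [profileField, profileX, reducedRate, Fin.zero_eta, Fin.mk_one,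
    Fin.reduceFinMk, Matrix.cons_val] <;> fun_prop

theorem exists_isProfile (δ α β κ y₀ ζ₀ w₀ : ℝ) :
    ∃ ε > 0, ∃ x y ζ w : ℝ → ℝ, IsProfile δ α β κ ε x y ζ w ∧
      (Continuous x ∧ Continuous y ∧ Continuous ζ ∧ Continuous w) ∧
      x 0 = α / 2 * y₀ ^ 2 ∧ y 0 = y₀ ∧ ζ 0 = ζ₀ ∧ w 0 = w₀ := by
  obtain ⟨ε, hε, v, hv, hv0, hode⟩ := exists_hasDerivAt_pow_mul_sub ![1, 0, 0, 0]
    (locallyLipschitz_profileField δ α β κ) ![0, y₀, ζ₀, w₀]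
  refine ⟨ε, hε, fun σ => profileX α (v σ), fun σ => v σ 1, fun σ => v σ 2, fun σ => v σ 3,
    fun σ hσ => ?_, ⟨by unfold profileX; fun_prop, by fun_prop, by fun_prop, by fun_prop⟩,
    by simp [profileX, hv0], by simp [hv0], by simp [hv0], by simp [hv0]⟩
  have hp : HasDerivAt (fun s => s * v s 0) (σ * profileField δ α β κ (σ, v σ) 0) σ := by
    simpa using hode σ hσ 0
  have hy : HasDerivAt (fun s => v s 1) (profileField δ α β κ (σ, v σ) 1) σ := by
    simpa using hode σ hσ 1
  have hζ : HasDerivAt (fun s => v s 2) (profileField δ α β κ (σ, v σ) 2) σ := by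
    simpa using hode σ hσ 2
  have hw : HasDerivAt (fun s => v s 3) (profileField δ α β κ (σ, v σ) 3) σ := by
    simpa using hode σ hσ 3
  refine ⟨?_, hy, hζ, hw⟩
  have hσy : HasDerivAt (fun s => s * (α / 2 * v s 1 ^ 2)) _ σ :=
    (hasDerivAt_id σ).mul ((hy.pow 2).const_mul (α / 2))
  refine ((hp.add hσy).congr_deriv ?_).congr_of_eventuallyEq (.of_forall fun s => ?_)
  · simp only [profileField, profileX, id_eq, Matrix.cons_val]
    ring
  · simp only [profileX, Pi.add_apply]
    ring

theorem exists_isStarSolutionOn_Iic (δ α β κ ζ₀ w₀ : ℝ) :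
    ∃ r > 0, ∃ x y ζ w : ℝ → ℝ,
      IsStarSolutionOn δ α β κ (Iic 0) (fun t => (r * Real.exp t) ^ 2 * x t)
        (fun t => r * Real.exp t * y t) (fun t => 1 + (r * Real.exp t) ^ 2 * ζ t)
        (fun t => (r * Real.exp t) ^ 2 * w t) ∧
      (∀ t ≤ 0, 0 < y t) ∧ Tendsto x atBot (𝓝 (α / 2)) ∧ Tendsto y atBot (𝓝 1) ∧
      Tendsto ζ atBot (𝓝 ζ₀) ∧ Tendsto w atBot (𝓝 w₀) := by
  obtain ⟨ε, hε, x, y, ζ, w, hprof, ⟨hx, hy, hζ, hw⟩, hx0, hy0, hζ0, hw0⟩ :=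
    exists_isProfile δ α β κ 1 ζ₀ w₀
  have hnear : ∀ᶠ σ in 𝓝[≥] (0 : ℝ), σ < ε ∧ 0 < y σ :=
    ((eventually_lt_nhds hε).and (hy.continuousAt.eventually_const_lt
      (by simp [hy0]))).filter_mono nhdsWithin_le_nhds
  obtain ⟨σ₀, hσ₀, hsub⟩ := mem_nhdsGE_iff_exists_Icc_subset.1 hnear
  have hr : 0 < √σ₀ := Real.sqrt_pos.2 hσ₀
  set r := √σ₀
  have hr2 : r ^ 2 = σ₀ := Real.sq_sqrt hσ₀.le
  have hpos : ∀ t, 0 < (r * Real.exp t) ^ 2 := fun t => by positivity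
  have hle : ∀ t ≤ 0, (r * Real.exp t) ^ 2 ≤ σ₀ := fun t ht => by
    rw [← hr2]
    gcongr
    exact mul_le_of_le_one_right hr.le (Real.exp_le_one_iff.2 ht)
  have hlim : Tendsto (fun t => (r * Real.exp t) ^ 2) atBot (𝓝 0) := by
    simpa using (Real.tendsto_exp_atBot.const_mul r).pow 2
  have hcomp {f : ℝ → ℝ} (hf : Continuous f) {a : ℝ} (ha : f 0 = a) :
      Tendsto (fun t => f ((r * Real.exp t) ^ 2)) atBot (𝓝 a) :=
    ha ▸ (hf.tendsto 0).comp hlim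
  exact ⟨r, hr, _, _, _, _,
    hprof.isStarSolutionOn (fun t _ => (Real.hasDerivAt_exp t).const_mul r)
      (fun t ht => ⟨hpos t, (hsub ⟨(hpos t).le, hle t ht⟩).1⟩),
    fun t ht => (hsub ⟨(hpos t).le, hle t ht⟩).2,
    hcomp hx (by simpa using hx0), hcomp hy hy0, hcomp hζ hζ0, hcomp hw hw0⟩

theorem tendsto_sq_mul_div_mul_sq {l : Filter ℝ} {e f g : ℝ → ℝ} {a : ℝ} (he : ∀ t, e t ≠ 0)
    (hf : Tendsto f l (𝓝 a)) (hg : Tendsto g l (𝓝 1)) :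
    Tendsto (fun t => e t ^ 2 * f t / (e t * g t) ^ 2) l (𝓝 a) := by
  have h : Tendsto (fun t => f t / g t ^ 2) l (𝓝 (a / 1 ^ 2)) := hf.div (hg.pow 2) (by norm_num)
  rw [one_pow, div_one] at h
  refine h.congr fun t => ?_
  rw [mul_pow, mul_div_mul_left _ _ (pow_ne_zero 2 (he t))]

end StarSystem

theorem stmt6_general (δ α β κ γ ω : ℝ) :
    ∃ X Y Z W : ℝ → ℝ,
      IsStarSolutionOn δ α β κ (Set.Iic 0) X Y Z W ∧
      (∀ t ≤ (0 : ℝ), 0 < Y t) ∧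
      (∃ M : ℝ, ∀ᶠ t in atBot,
        Real.exp (-2 * t) * (|X t| + |Z t - 1| + |W t|) ≤ M) ∧
      (∃ M : ℝ, ∀ᶠ t in atBot, Real.exp (-t) * |Y t| ≤ M) ∧
      Tendsto (fun t => W t / Y t ^ 2) atBot (𝓝 ω) ∧
      Tendsto (fun t => (1 - Z t) / Y t ^ 2) atBot (𝓝 γ) := by
  obtain ⟨r, hr, x, y, ζ, w, hsol, hypos, hx, hy, hζ, hw⟩ :=
    exists_isStarSolutionOn_Iic δ α β κ (-γ) ω
  have he : ∀ t, r * Real.exp t ≠ 0 := fun t => by positivity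
  have hexp (t : ℝ) : Real.exp (-t) * Real.exp t = 1 := by rw [← Real.exp_add]; simp
  have hexp2 (t : ℝ) : Real.exp (-2 * t) * Real.exp t ^ 2 = 1 := by
    rw [← Real.exp_nat_mul, ← Real.exp_add]
    simp
  have hXZW : Tendsto (fun t => Real.exp (-2 * t) * (|(r * Real.exp t) ^ 2 * x t| +
      |1 + (r * Real.exp t) ^ 2 * ζ t - 1| + |(r * Real.exp t) ^ 2 * w t|)) atBot
      (𝓝 (r ^ 2 * (|α / 2| + |-γ| + |ω|))) := by
    refine (((hx.abs.add hζ.abs).add hw.abs).const_mul (r ^ 2)).congr fun t => ?_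
    simp only [add_sub_cancel_left, abs_mul, abs_pow, abs_of_pos hr, Real.abs_exp]
    linear_combination -(r ^ 2 * (|x t| + |ζ t| + |w t|)) * hexp2 t
  have hY : Tendsto (fun t => Real.exp (-t) * |r * Real.exp t * y t|) atBot (𝓝 (r * |1|)) := by
    refine (hy.abs.const_mul r).congr fun t => ?_
    rw [abs_mul, abs_mul, abs_of_pos hr, Real.abs_exp]
    linear_combination -(r * |y t|) * hexp t
  refine ⟨_, _, _, _, hsol, fun t ht => mul_pos (by positivity) (hypos t ht),
    hXZW.isBoundedUnder_le, hY.isBoundedUnder_le, tendsto_sq_mul_div_mul_sq he hw hy,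
    (tendsto_sq_mul_div_mul_sq he (neg_neg γ ▸ hζ.neg) hy).congr fun t => by ring⟩

/-- For every `γ ∈ ℝ` there is a solution `(X,Y,Z,W)` of the system (★) on an interval
containing `(−∞, 0]` with `Y > 0`, with `e^{−2t}(|X| + |Z−1| + |W|)` and `e^{−t}|Y|`
bounded as `t → −∞`, and with `W/Y² → 1` and `(1−Z)/Y² → γ` as `t → −∞`. -/
theorem stmt6 (d : ℕ) (hd : 2 ≤ d) (q : ℝ) (γ : ℝ) :
    ∃ X Y Z W : ℝ → ℝ,
      (∀ t ∈ Set.Iic (0:ℝ),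
        HasDerivWithinAt X
          (X t * ((d : ℝ) * X t^2 + Z t^2 - 1) + (A2 d / (d : ℝ)) * Y t^2
            - (2 * A3 d q / (d : ℝ)) * W t^2) (Set.Iic 0) t ∧
        HasDerivWithinAt Y (Y t * ((d : ℝ) * X t^2 + Z t^2 - X t)) (Set.Iic 0) t ∧
        HasDerivWithinAt Z
          (Z t * ((d : ℝ) * X t^2 + Z t^2 - 1) + A3 d q * W t^2) (Set.Iic 0) t ∧
        HasDerivWithinAt W
          (W t * ((d : ℝ) * X t^2 + Z t^2 - 2*X t + Z t)) (Set.Iic 0) t) ∧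
      (∀ t ≤ (0:ℝ), 0 < Y t) ∧
      (∃ M : ℝ, ∀ᶠ t in atBot,
        Real.exp (-2*t) * (|X t| + |Z t - 1| + |W t|) ≤ M) ∧
      (∃ M : ℝ, ∀ᶠ t in atBot, Real.exp (-t) * |Y t| ≤ M) ∧
      Tendsto (fun t => W t / Y t^2) atBot (𝓝 1) ∧
      Tendsto (fun t => (1 - Z t) / Y t^2) atBot (𝓝 γ) :=
  stmt6_general d (A2 d / d) (2 * A3 d q / d) (A3 d q) γ 1
end

section
/- (Kellogg) Let B be a bounded convex open subset of a real Banach space 𝕍, and let T : closure(B) → closure(B) be a continuous map whose image is precompact, and which is continuously Fréchet differentiable on B. Suppose that: (a) for each v ∈ B, 1 is not an eigenvalue of the Fréchet derivative DT_v, i.e. the only h ∈ 𝕍 with DT_v(h) = h is h = 0; and (b) for each v in the boundary of B, T(v) ≠ v. Then T has exactly one fixed point in closure(B). -/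
open Filter Topology

/-!
Where `B` is convex and `1 - DT` is injective on it, the local fixed point index of `T` cannot vary:
by compactness of `DT` the map `x ↦ x - T x` is locally bounded below, uniformly on the convex hull
of the finitely many fixed points, so sliding along the segment from one fixed point to another is
an admissible homotopy, and every fixed point has the same index `c`, an integer.  The total index
is `1`, by contracting `T` to a point of `B`.  Hence the number of fixed points times `c` is `1`.

Indices are computed for a smooth finite-dimensional approximation of `T`, with the Brouwer degree
written as the integral of the Jacobian of a clamped map `φ ∘ f`, `φ` being constant far from `0` in
each coordinate: the Jacobian is a null Lagrangian, which makes this integral homotopy invariant.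
-/

section

open MeasureTheory Metric Set
open scoped NNReal

section NullLagrangian

theorem exists_det_eq_sum_mul_det_one_add_smul_sub_one {K M : Type*} [Field K] [AddCommGroup M]
    [Module K M] [Module.Finite K M] [Nontrivial M] {t : Finset K} (h0 : 0 ∉ t)
    (ht : Module.finrank K M ≤ t.card) :
    ∃ c : K → K, ∀ A : M →ₗ[K] M,
      LinearMap.det A = ∑ s ∈ t, c s * (LinearMap.det (1 + s • A) - 1) := by
  classical
  set n := Module.finrank K M
  refine ⟨fun s => s⁻¹ ^ n * (Lagrange.basis t Inv.inv s).eval 0, fun A => ?_⟩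
  set P : Polynomial K := (-A).charpoly - Polynomial.X ^ n
  have eval_P (s : K) (hs : s ≠ 0) : P.eval s⁻¹ = s⁻¹ ^ n * (LinearMap.det (1 + s • A) - 1) := by
    have hA : algebraMap K (Module.End K M) s⁻¹ - -A = s⁻¹ • (1 + s • A) := by
      rw [sub_neg_eq_add, smul_add, inv_smul_smul₀ hs, Algebra.algebraMap_eq_smul_one]
    rw [Polynomial.eval_sub, LinearMap.eval_charpoly, hA, LinearMap.det_smul, Polynomial.eval_pow,
      Polynomial.eval_X, mul_sub, mul_one]
  have eval_P_zero : P.eval 0 = LinearMap.det A := by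
    simp [P, LinearMap.eval_charpoly, n, Module.finrank_pos.ne']
  have degree_P : P.degree < t.card := by
    have hdeg : (-A).charpoly.degree = n := by
      rw [Polynomial.degree_eq_natDegree (-A).charpoly_monic.ne_zero, LinearMap.charpoly_natDegree]
    refine (Polynomial.degree_sub_lt_left (hdeg.trans (Polynomial.degree_X_pow n).symm)
      (-A).charpoly_monic.ne_zero ?_).trans_le (hdeg.trans_le (by exact_mod_cast ht))
    rw [(-A).charpoly_monic.leadingCoeff, (Polynomial.monic_X_pow n).leadingCoeff]
  have interpolation := Lagrange.eq_interpolate inv_injective.injOn degree_P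
  rw [← eval_P_zero, interpolation, Lagrange.interpolate_apply, Polynomial.eval_finsetSum]
  refine Finset.sum_congr rfl fun s hs => ?_
  rw [Polynomial.eval_mul, Polynomial.eval_C, eval_P s (ne_of_mem_of_not_mem hs h0)]
  ring

theorem bijective_id_add_of_lipschitzWith {E : Type*} [NormedAddCommGroup E] [CompleteSpace E]
    {g : E → E} {K : ℝ≥0} (hg : LipschitzWith K g) (hK : K < 1) :
    Function.Bijective fun x => x + g x := by
  have hcontr (y : E) : ContractingWith K fun x => y - g x :=
    ⟨hK, by simpa using (LipschitzWith.const y).sub hg⟩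
  refine ⟨fun x y hxy => ?_, fun y => ?_⟩
  · refine (hcontr (x + g x)).fixedPoint_unique' (add_sub_cancel_right x _) ?_
    change x + g x = y + g y at hxy
    change x + g x - g y = y
    rw [hxy, add_sub_cancel_right]
  · obtain ⟨x, hx, -⟩ := (hcontr y).exists_fixedPoint 0 (edist_ne_top _ _)
    exact ⟨x, (sub_eq_iff_eq_add.1 hx).symm⟩

theorem image_id_add_tsupport {E : Type*} [TopologicalSpace E] [AddZeroClass E] {g : E → E}
    (hg : Function.Bijective fun x => x + g x) :
    (fun x => x + g x) '' tsupport g = tsupport g := by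
  have hid (x : E) (hx : x ∉ tsupport g) : x + g x = x := by
    rw [image_eq_zero_of_notMem_tsupport hx, add_zero]
  refine Subset.antisymm ?_ fun y hy => ?_
  · rintro _ ⟨x, hx, rfl⟩
    by_contra h
    exact h (by rwa [hg.1 (hid _ h)])
  · obtain ⟨x, rfl⟩ := hg.2 y
    refine ⟨x, ?_, rfl⟩
    by_contra hx
    exact hx (by simpa only [hid x hx] using hy)

variable {E : Type*} [NormedAddCommGroup E] [NormedSpace ℝ E]

theorem continuous_det_fderiv {f : E → E} (hf : ContDiff ℝ 1 f) :
    Continuous fun x => (fderiv ℝ f x).det :=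
  ContinuousLinearMap.continuous_det.comp (hf.continuous_fderiv one_ne_zero)

theorem det_fderiv_comp {φ f : E → E} {x : E} (hφ : DifferentiableAt ℝ φ (f x))
    (hf : DifferentiableAt ℝ f x) :
    (fderiv ℝ (φ ∘ f) x).det = (fderiv ℝ φ (f x)).det * (fderiv ℝ f x).det := by
  rw [fderiv_comp x hφ hf]
  exact LinearMap.det_comp _ _

variable [FiniteDimensional ℝ E]

theorem eventually_forall_det_one_add_smul_pos (C : ℝ) :
    ∀ᶠ s : ℝ in 𝓝 0, ∀ A : E →L[ℝ] E, ‖A‖ ≤ C → 0 < (1 + s • A).det := by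
  have hcont : Continuous fun p : ℝ × (E →L[ℝ] E) => (1 + p.1 • p.2).det :=
    ContinuousLinearMap.continuous_det.comp (by fun_prop)
  have : ProperSpace (E →L[ℝ] E) := FiniteDimensional.proper ℝ _
  have hev := (isCompact_closedBall (0 : E →L[ℝ] E) C).eventually_forall_of_forall_eventually
    (x₀ := (0 : ℝ)) (P := fun s A => 0 < (1 + s • A).det) fun A _ =>
      hcont.continuousAt.eventually (lt_mem_nhds (by
        simp [ContinuousLinearMap.det]))
  filter_upwards [hev] with s hs A hA using hs A (mem_closedBall_zero_iff.2 hA)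

variable [MeasurableSpace E] [BorelSpace E] (μ : Measure E) [μ.IsAddHaarMeasure]

theorem eventually_integral_det_one_add_smul_fderiv_sub_one_eq_zero {G : E → E}
    (hG : ContDiff ℝ 1 G) (hGc : HasCompactSupport G) :
    ∀ᶠ s : ℝ in 𝓝 0, ∫ x, ((1 + s • fderiv ℝ G x).det - 1) ∂μ = 0 := by
  obtain ⟨C, hC⟩ := hG.lipschitzWith_of_hasCompactSupport hGc one_ne_zero
  have hcontr : ∀ᶠ s : ℝ in 𝓝 0, ‖s‖₊ * C < 1 := by
    have : Continuous fun s : ℝ => ‖s‖₊ * C := by fun_prop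
    exact this.continuousAt.eventually (gt_mem_nhds (by simp))
  filter_upwards [hcontr, eventually_forall_det_one_add_smul_pos (E := E) C] with s hs hdet
  set f : E → E := fun x => x + s • G x
  set S := tsupport fun x => s • G x
  have hderiv (x : E) : HasFDerivAt f (1 + s • fderiv ℝ G x) x :=
    (hasFDerivAt_id x).add ((hG.differentiable one_ne_zero x).hasFDerivAt.const_smul s)
  have hpos (x : E) : 0 < (1 + s • fderiv ℝ G x).det :=
    hdet _ (norm_fderiv_le_of_lipschitz ℝ hC)
  have hbij : Function.Bijective f :=
    bijective_id_add_of_lipschitzWith ((lipschitzWith_smul s).comp hC) hs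
  have hS : IsCompact S := hGc.smul_left (f := fun _ => s)
  have hvol : ∫ x in S, (1 + s • fderiv ℝ G x).det ∂μ = ∫ _ in S, (1 : ℝ) ∂μ := by
    have := integral_image_eq_integral_abs_det_fderiv_smul μ hS.measurableSet
      (fun x _ => (hderiv x).hasFDerivWithinAt) hbij.1.injOn (fun _ => (1 : ℝ))
    rw [image_id_add_tsupport hbij] at this
    simpa only [abs_of_pos (hpos _), smul_eq_mul, mul_one] using this.symm
  have hcont : Continuous fun x => (1 + s • fderiv ℝ G x).det :=
    ContinuousLinearMap.continuous_det.comp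
      (continuous_const.add ((hG.continuous_fderiv one_ne_zero).const_smul s))
  have hoff (x : E) (hx : x ∉ S) : (1 + s • fderiv ℝ G x).det - 1 = 0 := by
    have : s • fderiv ℝ G x = 0 := by
      rw [← fderiv_fun_const_smul (hG.differentiable one_ne_zero x)]
      exact image_eq_zero_of_notMem_tsupport fun h => hx (tsupport_fderiv_subset ℝ h)
    simp [this, ContinuousLinearMap.det]
  rw [← setIntegral_eq_integral_of_forall_compl_eq_zero hoff, integral_sub
    (hcont.continuousOn.integrableOn_compact hS)
    (continuousOn_const.integrableOn_compact hS), hvol, sub_self]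

theorem integral_det_fderiv_eq_zero [Nontrivial E] {G : E → E} (hG : ContDiff ℝ 1 G)
    (hGc : HasCompactSupport G) : ∫ x, (fderiv ℝ G x).det ∂μ = 0 := by
  have hsmall := eventually_integral_det_one_add_smul_fderiv_sub_one_eq_zero μ hG hGc
  obtain ⟨t, ht, hcard⟩ := ((infinite_of_mem_nhds 0 hsmall).sdiff
    (finite_singleton 0)).exists_subset_card_eq (Module.finrank ℝ E)
  obtain ⟨c, hc⟩ := exists_det_eq_sum_mul_det_one_add_smul_sub_one (M := E)
    (fun h0 => (ht h0).2 rfl) hcard.ge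
  have hdet (x : E) : (fderiv ℝ G x).det = ∑ s ∈ t, c s * ((1 + s • fderiv ℝ G x).det - 1) :=
    hc _
  have hint (s : ℝ) : Integrable (fun x => (1 + s • fderiv ℝ G x).det - 1) μ := by
    refine Continuous.integrable_of_hasCompactSupport ?_ ((hGc.fderiv ℝ).mono fun x hx => ?_)
    · exact (ContinuousLinearMap.continuous_det.comp (continuous_const.add
        ((hG.continuous_fderiv one_ne_zero).const_smul s))).sub continuous_const
    · contrapose! hx
      simp [Function.notMem_support.1 hx, ContinuousLinearMap.det]
  simp_rw [hdet]
  rw [integral_finsetSum t fun s _ => (hint s).const_mul (c s)]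
  refine Finset.sum_eq_zero fun s hs => ?_
  rw [integral_const_mul, (ht hs).1, mul_zero]

theorem setIntegral_det_fderiv_congr [Nontrivial E] {g g₁ : E → E} (hg : ContDiff ℝ 1 g)
    (hg₁ : ContDiff ℝ 1 g₁) {K U : Set E} (hK : IsClosed K) (hU : MeasurableSet U)
    (hUb : Bornology.IsBounded U) (hKU : K ⊆ U) (h : EqOn g g₁ Kᶜ) :
    ∫ x in U, (fderiv ℝ g x).det ∂μ = ∫ x in U, (fderiv ℝ g₁ x).det ∂μ := by
  obtain ⟨R, hR, hUR⟩ := hUb.subset_ball_lt 0 0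
  let χ : ContDiffBump (0 : E) := ⟨R, R + 1, hR, by linarith⟩
  have hχ (f : E → E) (hf : ContDiff ℝ 1 f) :
      (∫ x in U, (fderiv ℝ f x).det ∂μ) + ∫ x in Uᶜ, (fderiv ℝ (fun y => χ y • f y) x).det ∂μ
        = 0 := by
    have hF : ContDiff ℝ 1 fun y => χ y • f y := χ.contDiff.smul hf
    have hFc : HasCompactSupport fun y => χ y • f y := χ.hasCompactSupport.smul_right
    have hint : Integrable (fun x => (fderiv ℝ (fun y => χ y • f y) x).det) μ :=
      (continuous_det_fderiv hF).integrable_of_hasCompactSupport <|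
        (hFc.fderiv ℝ).comp_left (g := ContinuousLinearMap.det) (by
          simp [ContinuousLinearMap.det])
    rw [← integral_det_fderiv_eq_zero μ hF hFc, ← integral_add_compl hU hint]
    congr 1
    refine setIntegral_congr_fun hU fun x hx => ?_
    have : (fun y => χ y • f y) =ᶠ[𝓝 x] f := by
      filter_upwards [χ.eventuallyEq_one_of_mem_ball (hUR hx)] with y hy
      simp [hy]
    simp only [this.fderiv_eq]
  have hcompl : ∫ x in Uᶜ, (fderiv ℝ (fun y => χ y • g y) x).det ∂μ =
      ∫ x in Uᶜ, (fderiv ℝ (fun y => χ y • g₁ y) x).det ∂μ := by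
    refine setIntegral_congr_fun hU.compl fun x hx => ?_
    have : (fun y => χ y • g y) =ᶠ[𝓝 x] fun y => χ y • g₁ y := by
      filter_upwards [hK.isOpen_compl.mem_nhds fun hxK => hx (hKU hxK)] with y hy
      rw [h hy]
    simp only [this.fderiv_eq]
  linarith [hχ g hg, hχ g₁ hg₁]

end NullLagrangian

section Degree

variable {ι : Type*} [Fintype ι]

/-- A smooth map of `ι → ℝ` into the unit cube whose Jacobian is a probability density supported in
that cube.  Composing with it turns the count of preimages into the integral of a Jacobian. -/
noncomputable def smoothClamp (y : ι → ℝ) : ι → ℝ := fun i => Real.smoothTransition (y i)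

theorem contDiff_smoothClamp : ContDiff ℝ 1 (smoothClamp (ι := ι)) :=
  contDiff_pi.2 fun i => Real.smoothTransition.contDiff.comp (contDiff_apply ℝ ℝ i)

theorem det_fderiv_smoothClamp (y : ι → ℝ) :
    (fderiv ℝ smoothClamp y).det = ∏ i, deriv Real.smoothTransition (y i) := by
  classical
  have hderiv : HasFDerivAt smoothClamp (ContinuousLinearMap.pi fun i =>
      deriv Real.smoothTransition (y i) • ContinuousLinearMap.proj (R := ℝ) i) y :=
    hasFDerivAt_pi.2 fun i =>
      (Real.smoothTransition.contDiff.differentiable one_ne_zero _).hasDerivAt.comp_hasFDerivAt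
        (f := fun y : ι → ℝ => y i) y (hasFDerivAt_apply i y)
  rw [hderiv.fderiv, ContinuousLinearMap.det, ← LinearMap.det_toMatrix', ← Matrix.det_diagonal]
  congr 1
  ext i j
  simp [LinearMap.toMatrix'_apply, Matrix.diagonal_apply, Pi.single_apply]

theorem deriv_smoothTransition_eq_zero {t : ℝ} (ht : 1 < |t|) :
    deriv Real.smoothTransition t = 0 := by
  rcases lt_abs.1 ht with h | h
  · have : Real.smoothTransition =ᶠ[𝓝 t] fun _ => 1 := by
      filter_upwards [lt_mem_nhds h] with s hs using Real.smoothTransition.one_of_one_le hs.le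
    rw [this.deriv_eq, deriv_const]
  · have : Real.smoothTransition =ᶠ[𝓝 t] fun _ => 0 := by
      filter_upwards [gt_mem_nhds (show t < 0 by linarith)] with s hs
        using Real.smoothTransition.zero_of_nonpos hs.le
    rw [this.deriv_eq, deriv_const]

theorem integral_deriv_smoothTransition : ∫ t, deriv Real.smoothTransition t = 1 := by
  have hcont : Continuous (deriv Real.smoothTransition) :=
    Real.smoothTransition.contDiff.continuous_deriv le_rfl
  have hsupp : HasCompactSupport (deriv Real.smoothTransition) :=
    .intro (isCompact_closedBall 0 1) fun t ht =>
      deriv_smoothTransition_eq_zero (by simpa using ht)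
  rw [integral_of_hasDerivAt_of_tendsto
    (fun t => (Real.smoothTransition.contDiff.differentiable one_ne_zero t).hasDerivAt)
    (hcont.integrable_of_hasCompactSupport hsupp) (m := 0) (n := 1), sub_zero]
  · exact tendsto_const_nhds.congr' <| (eventually_le_atBot 0).mono fun t ht =>
      (Real.smoothTransition.zero_of_nonpos ht).symm
  · exact tendsto_const_nhds.congr' <| (eventually_ge_atTop 1).mono fun t ht =>
      (Real.smoothTransition.one_of_one_le ht).symm

theorem integral_det_fderiv_smoothClamp : ∫ y : ι → ℝ, (fderiv ℝ smoothClamp y).det = 1 := by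
  simp_rw [det_fderiv_smoothClamp]
  rw [integral_fintype_prod_volume_eq_prod fun _ : ι => deriv Real.smoothTransition]
  simp [integral_deriv_smoothTransition]

theorem det_fderiv_smoothClamp_eq_zero {y : ι → ℝ} (hy : 1 < ‖y‖) :
    (fderiv ℝ smoothClamp y).det = 0 := by
  obtain ⟨i, hi⟩ : ∃ i, 1 < ‖y i‖ := by
    contrapose! hy
    exact (pi_norm_le_iff_of_nonneg zero_le_one).2 hy
  rw [det_fderiv_smoothClamp]
  exact Finset.prod_eq_zero (Finset.mem_univ i) (deriv_smoothTransition_eq_zero hi)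

theorem det_fderiv_smoothClamp_comp_eq_zero {f : (ι → ℝ) → ι → ℝ} {x : ι → ℝ}
    (hf : DifferentiableAt ℝ f x) (hx : 1 < ‖f x‖) :
    (fderiv ℝ (smoothClamp ∘ f) x).det = 0 := by
  rw [det_fderiv_comp (contDiff_smoothClamp.differentiable one_ne_zero _) hf,
    det_fderiv_smoothClamp_eq_zero hx, zero_mul]

/-- The integral over `U` of the Jacobian of `f` clamped to the unit cube.  It is the Brouwer degree
of `f` at `0` as soon as `1 < ‖f x‖` for `x ∈ frontier U`, and carries no meaning otherwise. -/
noncomputable def clampedDegree (f : (ι → ℝ) → ι → ℝ) (U : Set (ι → ℝ)) : ℝ :=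
  ∫ x in U, (fderiv ℝ (smoothClamp ∘ f) x).det

variable {f f₁ : (ι → ℝ) → ι → ℝ} {U : Set (ι → ℝ)}

theorem clampedDegree_congr [Nonempty ι] (hf : ContDiff ℝ 1 f) (hf₁ : ContDiff ℝ 1 f₁)
    (hU : MeasurableSet U) (hUb : Bornology.IsBounded U) {K : Set (ι → ℝ)} (hK : IsClosed K)
    (hKU : K ⊆ U) (h : EqOn f f₁ Kᶜ) : clampedDegree f U = clampedDegree f₁ U :=
  setIntegral_det_fderiv_congr volume (contDiff_smoothClamp.comp hf)
    (contDiff_smoothClamp.comp hf₁) hK hU hUb hKU h.comp_left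

theorem clampedDegree_eq_of_segment [Nonempty ι] (hf : ContDiff ℝ 1 f) (hf₁ : ContDiff ℝ 1 f₁)
    (hU : IsOpen U) (hUb : Bornology.IsBounded U)
    (h : ∀ x ∈ frontier U, ∀ t ∈ Icc (0 : ℝ) 1, 1 < ‖AffineMap.lineMap (f x) (f₁ x) t‖) :
    clampedDegree f U = clampedDegree f₁ U := by
  have hfc := hf.continuous
  have hfc₁ := hf₁.continuous
  set K : Set (ι → ℝ) := Prod.fst '' ((closure U ×ˢ Icc (0 : ℝ) 1) ∩
    {p | ‖AffineMap.lineMap (f p.1) (f₁ p.1) p.2‖ ≤ 1})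
  have hK : IsClosed K := by
    refine (((hUb.isCompact_closure.prod isCompact_Icc).inter_right
      (isClosed_le ?_ continuous_const)).image continuous_fst).isClosed
    fun_prop
  have hKU : K ⊆ U := by
    rintro _ ⟨⟨x, t⟩, ⟨⟨hx, ht⟩, hle⟩, rfl⟩
    by_contra hxU
    exact (h x ⟨hx, by rwa [hU.interior_eq]⟩ t ht).not_ge hle
  have off_K (x : ι → ℝ) (hx : x ∈ U) (hxK : x ∉ K) (t : ℝ) (ht : t ∈ Icc (0 : ℝ) 1) :
      1 < ‖AffineMap.lineMap (f x) (f₁ x) t‖ := by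
    by_contra! hle
    exact hxK ⟨(x, t), ⟨⟨subset_closure hx, ht⟩, hle⟩, rfl⟩
  obtain ⟨χ, hχ₀, hχ₁, hχ⟩ := exists_contMDiffMap_zero_one_nhds_of_isClosed (n := 1)
    (modelWithCornersSelf ℝ (ι → ℝ)) hU.isClosed_compl hK (disjoint_compl_left_iff_subset.2 hKU)
  set w : (ι → ℝ) → ι → ℝ := fun x => f x + χ x • (f₁ x - f x)
  have hw_line (x : ι → ℝ) : w x = AffineMap.lineMap (f x) (f₁ x) (χ x) := by
    rw [AffineMap.lineMap_apply, vsub_eq_sub, vadd_eq_add, add_comm]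
  have hw : ContDiff ℝ 1 w := hf.add (χ.contMDiff.contDiff.smul (hf₁.sub hf))
  have hw_f : clampedDegree w U = clampedDegree f U := by
    refine clampedDegree_congr hw hf hU.measurableSet hUb (isClosed_tsupport χ) ?_ ?_
    · intro x hx
      by_contra hxU
      exact notMem_tsupport_iff_eventuallyEq.2 (hχ₀.filter_mono (nhds_le_nhdsSet hxU)) hx
    · intro x hx
      simp [w, image_eq_zero_of_notMem_tsupport hx]
  rw [← hw_f]
  refine setIntegral_congr_fun hU.measurableSet fun x hx => ?_
  by_cases hxK : x ∈ K
  · have : smoothClamp ∘ w =ᶠ[𝓝 x] smoothClamp ∘ f₁ := by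
      filter_upwards [hχ₁.filter_mono (nhds_le_nhdsSet hxK)] with y hy
      simp [w, hy]
    simp only [this.fderiv_eq]
  · have hw_x := off_K x hx hxK (χ x) (hχ x)
    have hf₁_x := off_K x hx hxK 1 (right_mem_Icc.2 zero_le_one)
    rw [← hw_line] at hw_x
    rw [AffineMap.lineMap_apply_one] at hf₁_x
    simp only [det_fderiv_smoothClamp_comp_eq_zero (hw.differentiable one_ne_zero x) hw_x,
      det_fderiv_smoothClamp_comp_eq_zero (hf₁.differentiable one_ne_zero x) hf₁_x]

theorem clampedDegree_eq_sum {α : Type*} (hf : ContDiff ℝ 1 f) (hU : MeasurableSet U)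
    (hUb : Bornology.IsBounded U) (s : Finset α) {W : α → Set (ι → ℝ)}
    (hW : ∀ i ∈ s, MeasurableSet (W i)) (hWU : ∀ i ∈ s, W i ⊆ U)
    (hd : (s : Set α).PairwiseDisjoint W) (h : ∀ x ∈ U \ ⋃ i ∈ s, W i, 1 < ‖f x‖) :
    clampedDegree f U = ∑ i ∈ s, clampedDegree f (W i) := by
  have hint : IntegrableOn (fun x => (fderiv ℝ (smoothClamp ∘ f) x).det) U :=
    ((continuous_det_fderiv (contDiff_smoothClamp.comp hf)).continuousOn.integrableOn_compact
      hUb.isCompact_closure).mono_set subset_closure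
  simp only [clampedDegree]
  rw [← integral_biUnion_finset s hW hd fun i hi => hint.mono_set (hWU i hi)]
  exact setIntegral_eq_of_subset_of_forall_sdiff_eq_zero hU (iUnion₂_subset hWU) fun x hx =>
    det_fderiv_smoothClamp_comp_eq_zero (hf.differentiable one_ne_zero x) (h x hx)

theorem clampedDegree_of_injOn (hf : ContDiff ℝ 1 f) (hU : MeasurableSet U) (hinj : InjOn f U)
    (hball : closedBall 0 1 ⊆ f '' U) {σ : SignType}
    (hσ : ∀ x ∈ U, SignType.sign (fderiv ℝ f x).det = σ) : clampedDegree f U = σ := by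
  have change_of_variables := integral_image_eq_integral_abs_det_fderiv_smul volume hU
    (fun x _ => (hf.differentiable one_ne_zero x).hasFDerivAt.hasFDerivWithinAt) hinj
    fun y => (fderiv ℝ smoothClamp y).det
  rw [setIntegral_eq_integral_of_forall_compl_eq_zero fun y hy => ?_,
    integral_det_fderiv_smoothClamp] at change_of_variables
  · rw [← mul_one (σ : ℝ), change_of_variables, ← integral_const_mul]
    refine setIntegral_congr_fun hU fun x hx => ?_
    simp only [det_fderiv_comp (contDiff_smoothClamp.differentiable one_ne_zero _)
      (hf.differentiable one_ne_zero x), smul_eq_mul]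
    rw [← mul_assoc, ← hσ x hx, sign_mul_abs, mul_comm]
  · exact det_fderiv_smoothClamp_eq_zero <| not_le.1 fun hle =>
      hy (hball (mem_closedBall_zero_iff.2 hle))

theorem clampedDegree_comp_add_left (f : (ι → ℝ) → ι → ℝ) (U : Set (ι → ℝ)) (p : ι → ℝ) :
    clampedDegree (fun x => f (p + x)) ((p + ·) ⁻¹' U) = clampedDegree f U := by
  have hderiv (x : ι → ℝ) : fderiv ℝ (smoothClamp ∘ fun x => f (p + x)) x =
      fderiv ℝ (smoothClamp ∘ f) (p + x) := fderiv_comp_add_left (f := smoothClamp ∘ f) p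
  simp_rw [clampedDegree, hderiv]
  exact (measurePreserving_add_left volume p).setIntegral_preimage_emb
    (measurableEmbedding_addLeft p) (fun x => (fderiv ℝ (smoothClamp ∘ f) x).det) U

end Degree

section BrouwerDegree

variable {ι : Type*} [Fintype ι]

/-- The Brouwer degree at `0` of `f` on `U`, for a bounded open set `U` and a `C¹` map `f` without
zeros on `frontier U`: the eventual value of `clampedDegree (k • f) U` for large `k`. -/
noncomputable def brouwerDegree (f : (ι → ℝ) → ι → ℝ) (U : Set (ι → ℝ)) : ℝ :=
  limUnder atTop fun k : ℝ => clampedDegree (k • f) U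

theorem eventually_forall_one_lt_norm_smul {α E : Type*} [TopologicalSpace α]
    [NormedAddCommGroup E] [NormedSpace ℝ E] {K : Set α} (hK : IsCompact K) {f : α → E}
    (hf : ContinuousOn f K) (h : ∀ x ∈ K, f x ≠ 0) :
    ∀ᶠ k : ℝ in atTop, ∀ x ∈ K, 1 < ‖k • f x‖ := by
  obtain ⟨m, hm₀, hm⟩ := hK.exists_forall_le' hf.norm fun x hx => norm_pos_iff.2 (h x hx)
  filter_upwards [eventually_gt_atTop m⁻¹] with k hk x hx
  rw [norm_smul, Real.norm_of_nonneg ((inv_pos.2 hm₀).trans hk).le]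
  calc 1 = m⁻¹ * m := (inv_mul_cancel₀ hm₀.ne').symm
    _ < k * m := by gcongr
    _ ≤ k * ‖f x‖ := mul_le_mul_of_nonneg_left (hm x hx) ((inv_pos.2 hm₀).trans hk).le

variable {f f₁ : (ι → ℝ) → ι → ℝ} {U : Set (ι → ℝ)}

theorem isCompact_frontier_of_isBounded {E : Type*} [PseudoMetricSpace E] [ProperSpace E]
    {U : Set E} (hU : Bornology.IsBounded U) : IsCompact (frontier U) :=
  hU.isCompact_closure.of_isClosed_subset isClosed_frontier frontier_subset_closure

theorem brouwerDegree_eq_of_eventually {c : ℝ}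
    (h : ∀ᶠ k : ℝ in atTop, clampedDegree (k • f) U = c) : brouwerDegree f U = c :=
  (tendsto_const_nhds.congr' (h.mono fun _ hk => hk.symm)).limUnder_eq

theorem brouwerDegree_comp_add_left (f : (ι → ℝ) → ι → ℝ) (U : Set (ι → ℝ)) (p : ι → ℝ) :
    brouwerDegree (fun x => f (p + x)) ((p + ·) ⁻¹' U) = brouwerDegree f U := by
  simp_rw [brouwerDegree, ← fun k : ℝ => clampedDegree_comp_add_left (k • f) U p]
  rfl

variable [Nonempty ι]

theorem eventually_clampedDegree_smul_eq (hf : ContDiff ℝ 1 f) (hU : IsOpen U)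
    (hUb : Bornology.IsBounded U) (h : ∀ x ∈ frontier U, f x ≠ 0) :
    ∀ᶠ k : ℝ in atTop, clampedDegree (k • f) U = brouwerDegree f U := by
  obtain ⟨k₀, hk₀⟩ := (eventually_forall_one_lt_norm_smul (isCompact_frontier_of_isBounded hUb)
    hf.continuous.continuousOn h).exists_forall_of_atTop
  have hconst : ∀ᶠ k : ℝ in atTop, clampedDegree (k • f) U = clampedDegree (k₀ • f) U := by
    filter_upwards [eventually_ge_atTop k₀] with k hk
    refine (clampedDegree_eq_of_segment (hf.const_smul k₀) (hf.const_smul k) hU hUb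
      fun x hx t ht => ?_).symm
    have : AffineMap.lineMap (k₀ • f x) (k • f x) t = AffineMap.lineMap k₀ k t • f x := by
      simp only [AffineMap.lineMap_apply_module]
      module
    change 1 < ‖AffineMap.lineMap (k₀ • f x) (k • f x) t‖
    rw [this]
    exact hk₀ _ ((convex_Ici k₀).lineMap_mem self_mem_Ici hk ht) x hx
  rwa [brouwerDegree_eq_of_eventually hconst]

theorem brouwerDegree_eq_of_segment (hf : ContDiff ℝ 1 f) (hf₁ : ContDiff ℝ 1 f₁)
    (hU : IsOpen U) (hUb : Bornology.IsBounded U)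
    (h : ∀ x ∈ frontier U, ∀ t ∈ Icc (0 : ℝ) 1, AffineMap.lineMap (f x) (f₁ x) t ≠ 0) :
    brouwerDegree f U = brouwerDegree f₁ U := by
  have hfc := hf.continuous
  have hfc₁ := hf₁.continuous
  have hlarge := eventually_forall_one_lt_norm_smul
    ((isCompact_frontier_of_isBounded hUb).prod (isCompact_Icc (a := (0 : ℝ)) (b := 1)))
    (f := fun p => AffineMap.lineMap (f p.1) (f₁ p.1) p.2) (by fun_prop)
    fun p hp => h p.1 hp.1 p.2 hp.2
  obtain ⟨k, hk, hkf, hkf₁⟩ := (hlarge.and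
    ((eventually_clampedDegree_smul_eq hf hU hUb fun x hx => by simpa using h x hx 0 (by simp)).and
      (eventually_clampedDegree_smul_eq hf₁ hU hUb fun x hx => by
        simpa using h x hx 1 (by simp)))).exists
  rw [← hkf, ← hkf₁]
  refine clampedDegree_eq_of_segment (hf.const_smul k) (hf₁.const_smul k) hU hUb
    fun x hx t ht => ?_
  have : AffineMap.lineMap (k • f x) (k • f₁ x) t = k • AffineMap.lineMap (f x) (f₁ x) t := by
    simp only [AffineMap.lineMap_apply_module]
    module
  change 1 < ‖AffineMap.lineMap (k • f x) (k • f₁ x) t‖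
  rw [this]
  exact hk (x, t) ⟨hx, ht⟩

theorem brouwerDegree_eq_of_homotopy {H : unitInterval → (ι → ℝ) → ι → ℝ}
    (hH : ∀ s, ContDiff ℝ 1 (H s)) (hHc : Continuous fun p : unitInterval × (ι → ℝ) => H p.1 p.2)
    (hU : IsOpen U) (hUb : Bornology.IsBounded U) (h : ∀ s, ∀ x ∈ frontier U, H s x ≠ 0) :
    brouwerDegree (H 0) U = brouwerDegree (H 1) U := by
  have hloc : IsLocallyConstant fun s => brouwerDegree (H s) U := by
    rw [IsLocallyConstant.iff_eventually_eq]
    intro s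
    have hHs := (hH s).continuous
    have hcont : Continuous fun p : unitInterval × ((ι → ℝ) × ℝ) =>
        AffineMap.lineMap (k := ℝ) (H s p.2.1) (H p.1 p.2.1) p.2.2 := by
      have := hHc.comp (f := fun p : unitInterval × ((ι → ℝ) × ℝ) => (p.1, p.2.1)) (by fun_prop)
      fun_prop
    have hnear := ((isCompact_frontier_of_isBounded hUb).prod
      (isCompact_Icc (a := (0 : ℝ)) (b := 1))).eventually_forall_of_forall_eventually
      (x₀ := s) (P := fun s' q => AffineMap.lineMap (k := ℝ) (H s q.1) (H s' q.1) q.2 ≠ 0)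
      fun q hq => hcont.continuousAt.eventually_ne (by simpa using h s q.1 hq.1)
    filter_upwards [hnear] with s' hs'
    exact (brouwerDegree_eq_of_segment (hH s) (hH s') hU hUb
      fun x hx t ht => hs' (x, t) ⟨hx, ht⟩).symm
  exact hloc.apply_eq_of_preconnectedSpace 0 1

theorem brouwerDegree_eq_sum {α : Type*} (hf : ContDiff ℝ 1 f) (hU : IsOpen U)
    (hUb : Bornology.IsBounded U) (s : Finset α) {W : α → Set (ι → ℝ)}
    (hW : ∀ i ∈ s, IsOpen (W i)) (hWU : ∀ i ∈ s, W i ⊆ U)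
    (hd : (s : Set α).PairwiseDisjoint W) (h : ∀ x ∈ closure U \ ⋃ i ∈ s, W i, f x ≠ 0) :
    brouwerDegree f U = ∑ i ∈ s, brouwerDegree f (W i) := by
  have hcompact : IsCompact (closure U \ ⋃ i ∈ s, W i) :=
    hUb.isCompact_closure.diff (isOpen_biUnion hW)
  have hfrU : frontier U ⊆ closure U \ ⋃ i ∈ s, W i := by
    rw [hU.frontier_eq]
    exact sdiff_subset_sdiff_right (iUnion₂_subset hWU)
  have hfrW (i : α) (hi : i ∈ s) : frontier (W i) ⊆ closure U \ ⋃ i ∈ s, W i := by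
    rw [(hW i hi).frontier_eq]
    refine fun x hx => ⟨closure_mono (hWU i hi) hx.1, fun hxW => ?_⟩
    obtain ⟨j, hj, hxj⟩ := mem_iUnion₂.1 hxW
    by_cases hij : i = j
    · exact hx.2 (hij ▸ hxj)
    · exact ((hd hi hj hij).closure_left (hW j hj)).notMem_of_mem_left hx.1 hxj
  obtain ⟨k, hk, hkU, hkW⟩ :=
    ((eventually_forall_one_lt_norm_smul hcompact hf.continuous.continuousOn h).and
      ((eventually_clampedDegree_smul_eq hf hU hUb fun x hx => h x (hfrU hx)).and
        ((Finset.eventually_all s).2 fun i hi => eventually_clampedDegree_smul_eq hf (hW i hi)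
          (hUb.subset (hWU i hi)) fun x hx => h x (hfrW i hi hx)))).exists
  rw [← hkU, clampedDegree_eq_sum (f := k • f) (hf.const_smul k) hU.measurableSet hUb s
    (fun i hi => (hW i hi).measurableSet) hWU hd fun x hx => hk x ⟨subset_closure hx.1, hx.2⟩]
  exact Finset.sum_congr rfl hkW

end BrouwerDegree

section RegularZeros

variable {ι : Type*} [Fintype ι] {f : (ι → ℝ) → ι → ℝ} {U : Set (ι → ℝ)}

theorem exists_isOpen_injOn_of_det_fderiv_ne_zero {z : ι → ℝ} (hf : ContDiff ℝ 1 f)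
    (hz : (fderiv ℝ f z).det ≠ 0) :
    ∃ N, IsOpen N ∧ z ∈ N ∧ InjOn f N ∧
      ∀ x ∈ N, SignType.sign (fderiv ℝ f x).det = SignType.sign (fderiv ℝ f z).det := by
  have hstrict : HasStrictFDerivAt f
      (ContinuousLinearMap.toContinuousLinearEquivOfDetNeZero _ hz : (ι → ℝ) →L[ℝ] (ι → ℝ)) z :=
    hf.contDiffAt.hasStrictFDerivAt one_ne_zero
  have hsign : ∀ᶠ x in 𝓝 z,
      SignType.sign (fderiv ℝ f x).det = SignType.sign (fderiv ℝ f z).det :=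
    (ContinuousAt.comp (f := fun x => (fderiv ℝ f x).det) (continuousAt_sign_of_ne_zero hz)
      (continuous_det_fderiv hf).continuousAt).eventually
      ((isOpen_discrete {_}).mem_nhds rfl)
  obtain ⟨N, hN, hNo, hzN⟩ := _root_.eventually_nhds_iff.1 hsign
  exact ⟨_, (hstrict.toOpenPartialHomeomorph f).open_source.inter hNo,
    ⟨hstrict.mem_toOpenPartialHomeomorph_source, hzN⟩,
    (hstrict.toOpenPartialHomeomorph f).injOn.mono inter_subset_left, fun x hx => hN x hx.2⟩

theorem image_mem_nhds_of_det_fderiv_ne_zero {z : ι → ℝ} (hf : ContDiff ℝ 1 f)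
    (hz : (fderiv ℝ f z).det ≠ 0) (hU : U ∈ 𝓝 z) : f '' U ∈ 𝓝 (f z) := by
  have hstrict : HasStrictFDerivAt f
      (ContinuousLinearMap.toContinuousLinearEquivOfDetNeZero _ hz : (ι → ℝ) →L[ℝ] (ι → ℝ)) z :=
    hf.contDiffAt.hasStrictFDerivAt one_ne_zero
  exact hstrict.map_nhds_eq_of_equiv ▸ image_mem_map hU

theorem brouwerDegree_eq_sign_det_of_injOn {z : ι → ℝ} (hf : ContDiff ℝ 1 f) (hU : IsOpen U)
    (hzU : z ∈ U) (hz : f z = 0) (hdet : (fderiv ℝ f z).det ≠ 0) (hinj : InjOn f U)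
    (hsign : ∀ x ∈ U, SignType.sign (fderiv ℝ f x).det = SignType.sign (fderiv ℝ f z).det) :
    brouwerDegree f U = SignType.sign (fderiv ℝ f z).det := by
  have himage : f '' U ∈ 𝓝 0 :=
    hz ▸ image_mem_nhds_of_det_fderiv_ne_zero hf hdet (hU.mem_nhds hzU)
  obtain ⟨r, hr, hball⟩ := nhds_basis_closedBall.mem_iff.1 himage
  refine brouwerDegree_eq_of_eventually ?_
  filter_upwards [eventually_ge_atTop r⁻¹] with k hk
  have hk₀ : 0 < k := (inv_pos.2 hr).trans_le hk
  refine clampedDegree_of_injOn (f := k • f) (hf.const_smul k) hU.measurableSet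
    (fun x hx y hy hxy => hinj hx hy (smul_right_injective _ hk₀.ne' hxy)) (fun y hy => ?_)
    fun x hx => ?_
  · obtain ⟨x, hx, hxy⟩ := hball (show k⁻¹ • y ∈ closedBall 0 r by
      rw [mem_closedBall_zero_iff, norm_smul, norm_inv, Real.norm_of_nonneg hk₀.le]
      exact (mul_le_of_le_one_right (by positivity) (mem_closedBall_zero_iff.1 hy)).trans
        (inv_le_of_inv_le₀ hr hk))
    exact ⟨x, hx, by simp [hxy, hk₀.ne']⟩
  · have hderiv : fderiv ℝ (k • f) x = k • fderiv ℝ f x :=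
      fderiv_const_smul (hf.differentiable one_ne_zero x) k
    have hdet_smul : (k • fderiv ℝ f x).det = k ^ Fintype.card ι * (fderiv ℝ f x).det :=
      (LinearMap.det_smul k _).trans (by simp [ContinuousLinearMap.det])
    rw [hderiv, hdet_smul, sign_mul, sign_pos (by positivity), one_mul, hsign x hx]

theorem brouwerDegree_sub_const {b : ι → ℝ} (hU : IsOpen U) (hb : b ∈ U) :
    brouwerDegree (fun x => x - b) U = 1 := by
  have hdet (x : ι → ℝ) : (fderiv ℝ (fun x => x - b) x).det = 1 := by
    rw [fderiv_sub_const, fderiv_fun_id]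
    exact LinearMap.det_id
  rw [brouwerDegree_eq_sign_det_of_injOn (contDiff_fun_id.sub contDiff_const) hU hb (sub_self b)
    (by rw [hdet]; exact one_ne_zero) (sub_left_injective.injOn) fun x _ => by rw [hdet, hdet],
    hdet, sign_one, SignType.coe_one]

theorem finite_zeros_of_det_fderiv_ne_zero (hf : ContDiff ℝ 1 f) {K : Set (ι → ℝ)}
    (hK : IsCompact K) (hreg : ∀ x ∈ K, f x = 0 → (fderiv ℝ f x).det ≠ 0) :
    (K ∩ {x | f x = 0}).Finite := by
  refine (hK.inter_right (isClosed_eq hf.continuous continuous_const)).finite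
    (isDiscrete_iff_forall_mem_exists_isOpen.2 fun x hx => ?_)
  obtain ⟨N, hNo, hxN, hinj, -⟩ :=
    exists_isOpen_injOn_of_det_fderiv_ne_zero hf (hreg x hx.1 hx.2)
  refine ⟨N, hNo, Subset.antisymm (fun y hy => ?_) (singleton_subset_iff.2 ⟨hxN, hx⟩)⟩
  exact hinj hy.1 hxN (hy.2.2.trans hx.2.symm)

theorem exists_norm_lt_forall_eq_imp_det_fderiv_ne_zero (hf : Differentiable ℝ f) {δ : ℝ}
    (hδ : 0 < δ) : ∃ a : ι → ℝ, ‖a‖ < δ ∧ ∀ x, f x = a → (fderiv ℝ f x).det ≠ 0 := by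
  by_contra! hcrit
  have sard := addHaar_image_eq_zero_of_det_fderivWithin_eq_zero (volume : Measure (ι → ℝ))
    (s := {x | (fderiv ℝ f x).det = 0}) (fun x _ => (hf x).hasFDerivAt.hasFDerivWithinAt)
    fun x hx => hx
  refine (measure_ball_pos volume (0 : ι → ℝ) hδ).ne' (measure_mono_null (fun a ha => ?_) sard)
  obtain ⟨x, hx, hdet⟩ := hcrit a (mem_ball_zero_iff.1 ha)
  exact ⟨x, hdet, hx⟩

variable [Nonempty ι]

theorem brouwerDegree_eq_sum_sign_det (hf : ContDiff ℝ 1 f) (hU : IsOpen U)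
    (hUb : Bornology.IsBounded U) (hfr : ∀ x ∈ frontier U, f x ≠ 0) {Z : Finset (ι → ℝ)}
    (hZ : ∀ x, x ∈ Z ↔ x ∈ U ∧ f x = 0) (hreg : ∀ z ∈ Z, (fderiv ℝ f z).det ≠ 0) :
    brouwerDegree f U = ∑ z ∈ Z, (SignType.sign (fderiv ℝ f z).det : ℝ) := by
  choose! N hNo hzN hinj hsign using fun z hz =>
    exists_isOpen_injOn_of_det_fderiv_ne_zero hf (hreg z hz)
  obtain ⟨O, hO, hdisj⟩ := Z.finite_toSet.t2_separation
  have hWo (z) (hz : z ∈ Z) : IsOpen (U ∩ N z ∩ O z) := (hU.inter (hNo z hz)).inter (hO z).2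
  have hzW (z) (hz : z ∈ Z) : z ∈ U ∩ N z ∩ O z := ⟨⟨((hZ z).1 hz).1, hzN z hz⟩, (hO z).1⟩
  rw [brouwerDegree_eq_sum hf hU hUb Z hWo (fun z _ => inter_subset_left.trans inter_subset_left)
    (hdisj.mono fun z => inter_subset_right)]
  · exact Finset.sum_congr rfl fun z hz =>
      brouwerDegree_eq_sign_det_of_injOn hf (hWo z hz) (hzW z hz) ((hZ z).1 hz).2 (hreg z hz)
        ((hinj z hz).mono fun x hx => hx.1.2) fun x hx => hsign z hz x hx.1.2
  · intro x hx hfx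
    have hxU : x ∈ U := by
      by_contra hxU
      exact hfr x (hU.frontier_eq ▸ ⟨hx.1, hxU⟩) hfx
    exact hx.2 (mem_biUnion ((hZ x).2 ⟨hxU, hfx⟩) (hzW x ((hZ x).2 ⟨hxU, hfx⟩)))

theorem exists_int_brouwerDegree_eq (hf : ContDiff ℝ 1 f) (hU : IsOpen U)
    (hUb : Bornology.IsBounded U) (hfr : ∀ x ∈ frontier U, f x ≠ 0) :
    ∃ c : ℤ, brouwerDegree f U = c := by
  obtain ⟨m, hm₀, hm⟩ := (isCompact_frontier_of_isBounded hUb).exists_forall_le'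
    hf.continuous.norm.continuousOn fun x hx => norm_pos_iff.2 (hfr x hx)
  obtain ⟨a, ham, hreg⟩ :=
    exists_norm_lt_forall_eq_imp_det_fderiv_ne_zero (hf.differentiable one_ne_zero) hm₀
  have hfa : ContDiff ℝ 1 fun x => f x - a := hf.sub contDiff_const
  have hreg_sub (x : ι → ℝ) (hx : f x - a = 0) : (fderiv ℝ (fun x => f x - a) x).det ≠ 0 := by
    rw [fderiv_sub_const]
    exact hreg x (sub_eq_zero.1 hx)
  have hsegment (x : ι → ℝ) (hx : x ∈ frontier U) (t : ℝ) (ht : t ∈ Icc (0 : ℝ) 1) :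
      AffineMap.lineMap (f x) (f x - a) t ≠ 0 := by
    have : AffineMap.lineMap (f x) (f x - a) t = f x - t • a := by
      rw [AffineMap.lineMap_apply_module]
      module
    rw [this, sub_ne_zero]
    refine fun h => ((hm x hx).trans_eq (h ▸ norm_smul t a)).not_gt ?_
    rw [Real.norm_of_nonneg ht.1]
    exact (mul_le_of_le_one_left (norm_nonneg a) ht.2).trans_lt ham
  have hfr_sub (x : ι → ℝ) (hx : x ∈ frontier U) : f x - a ≠ 0 := by
    simpa using hsegment x hx 1 (by simp)
  have hfin : (U ∩ {x | f x - a = 0}).Finite :=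
    (finite_zeros_of_det_fderiv_ne_zero hfa hUb.isCompact_closure fun x _ => hreg_sub x).subset
      (inter_subset_inter_left _ subset_closure)
  refine ⟨∑ z ∈ hfin.toFinset, SignType.sign (fderiv ℝ (fun x => f x - a) z).det, ?_⟩
  rw [brouwerDegree_eq_of_segment hf hfa hU hUb hsegment,
    brouwerDegree_eq_sum_sign_det hfa hU hUb hfr_sub (fun x => hfin.mem_toFinset)
      fun z hz => hreg_sub z (hfin.mem_toFinset.1 hz).2]
  push_cast
  rfl

end RegularZeros

section CompactMaps

theorem totallyBounded_of_forall_subset_thickening {X : Type*} [PseudoMetricSpace X] {s : Set X}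
    (h : ∀ ε > 0, ∃ t, TotallyBounded t ∧ s ⊆ thickening ε t) : TotallyBounded s := by
  refine totallyBounded_iff.2 fun ε hε => ?_
  obtain ⟨t, ht, hst⟩ := h (ε / 2) (half_pos hε)
  obtain ⟨c, hc, htc⟩ := totallyBounded_iff.1 ht (ε / 2) (half_pos hε)
  refine ⟨c, hc, fun x hx => ?_⟩
  obtain ⟨y, hy, hxy⟩ := mem_thickening_iff.1 (hst hx)
  obtain ⟨z, hz, hyz⟩ := mem_iUnion₂.1 (htc hy)
  exact mem_biUnion hz ((dist_triangle x y z).trans_lt (by linarith [mem_ball.1 hyz]))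

variable {E F : Type*} [NormedAddCommGroup E] [NormedAddCommGroup F]

theorem eventually_forall_mem_closedBall_mul_norm_sub_le {f : E → F} {K : Set E}
    (hK : IsCompact K)
    (hf : ∀ v ∈ K, (fun p : E × E => p.1 - p.2) =O[𝓝 (v, v)] fun p => f p.1 - f p.2) :
    ∀ᶠ r in 𝓝[>] (0 : ℝ), ∀ v ∈ K, ∀ x ∈ closedBall v r, r * ‖x - v‖ ≤ ‖f x - f v‖ := by
  refine hK.induction_on (p := fun K => ∀ᶠ r in 𝓝[>] (0 : ℝ), ∀ v ∈ K, ∀ x ∈ closedBall v r,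
    r * ‖x - v‖ ≤ ‖f x - f v‖) (by simp) (fun s t hst ht => ?_) (fun s t hs ht => ?_) fun v hv => ?_
  · filter_upwards [ht] with r hr v hv using hr v (hst hv)
  · filter_upwards [hs, ht] with r hrs hrt v hv
    exact hv.elim (hrs v) (hrt v)
  · obtain ⟨c, hc, hcf⟩ := (hf v hv).exists_pos
    obtain ⟨δ, hδ, hball⟩ := nhds_basis_ball.eventually_iff.1 hcf.bound
    refine ⟨ball v (δ / 2), mem_nhdsWithin_of_mem_nhds (ball_mem_nhds v (half_pos hδ)), ?_⟩
    filter_upwards [Ioo_mem_nhdsGT (half_pos hδ), Ioo_mem_nhdsGT (inv_pos.2 hc)]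
      with r hrδ hrc w hw x hx
    have hxv : dist x v < δ := by
      linarith [dist_triangle x w v, mem_closedBall.1 hx, mem_ball.1 hw, hrδ.2]
    have hwv : dist w v < δ := (mem_ball.1 hw).trans (half_lt_self hδ)
    have hxw : ‖x - w‖ ≤ c * ‖f x - f w‖ :=
      hball (show (x, w) ∈ ball (v, v) δ from max_lt hxv hwv)
    calc r * ‖x - w‖ ≤ c⁻¹ * ‖x - w‖ := by gcongr; exact hrc.2.le
      _ ≤ ‖f x - f w‖ := (inv_mul_le_iff₀ hc).2 hxw

theorem eq_of_mul_norm_sub_le {f : E → F} {x v : E} {r : ℝ} (hr : 0 < r) (hxv : f x = f v)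
    (h : r * ‖x - v‖ ≤ ‖f x - f v‖) : x = v := by
  rw [hxv, sub_self, norm_zero] at h
  exact sub_eq_zero.1 (norm_le_zero_iff.1 (nonpos_of_mul_nonpos_right h hr))

theorem finite_of_isCompact_of_isBigO_sub {f : E → F} {Z : Set E} (hZ : IsCompact Z)
    (h0 : ∀ z ∈ Z, f z = 0)
    (hf : ∀ v ∈ Z, (fun p : E × E => p.1 - p.2) =O[𝓝 (v, v)] fun p => f p.1 - f p.2) :
    Z.Finite := by
  obtain ⟨r, hr, hr0⟩ := ((eventually_forall_mem_closedBall_mul_norm_sub_le hZ hf).and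
    self_mem_nhdsWithin).exists
  refine hZ.finite (isDiscrete_iff_forall_mem_exists_isOpen.2 fun z hz =>
    ⟨ball z r, isOpen_ball, ?_⟩)
  refine subset_antisymm (fun x hx => ?_) (by simpa [hz] using hr0)
  exact eq_of_mul_norm_sub_le hr0 (by rw [h0 x hx.2, h0 z hz])
    (hr z hz x (ball_subset_closedBall hx.1))

variable [NormedSpace ℝ E] [NormedSpace ℝ F] {V : Type*} [NormedAddCommGroup V] [NormedSpace ℝ V]

theorem isCompactOperator_of_hasFDerivAt [CompleteSpace F] {f : E → F} {A : E →L[ℝ] F} {v : E}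
    {s : Set E} (hA : HasFDerivAt f A v) (hs : s ∈ 𝓝 v) (hf : TotallyBounded (f '' s)) :
    IsCompactOperator A := by
  refine (isCompactOperator_iff_isCompact_closure_image_closedBall (A : E →ₗ[ℝ] F) one_pos).2
    (TotallyBounded.closure ?_ |>.isCompact_of_isClosed isClosed_closure)
  refine totallyBounded_of_forall_subset_thickening fun ε hε => ?_
  have hlin : ∀ᶠ h in 𝓝 (0 : E), ‖f (v + h) - f v - A h‖ ≤ ε / 2 * ‖h‖ :=
    (hasFDerivAt_iff_isLittleO_nhds_zero.1 hA).def (half_pos hε)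
  have hmem : ∀ᶠ h in 𝓝 (0 : E), v + h ∈ s :=
    (continuous_const_add v).continuousAt.eventually_mem (by simpa using hs)
  obtain ⟨δ, hδ, hball⟩ := nhds_basis_closedBall.eventually_iff.1 (hlin.and hmem)
  -- the difference quotients with step `δ` approximate `A` uniformly on the unit ball
  refine ⟨(fun y => δ⁻¹ • (y - f v)) '' (f '' s), hf.image ?_, ?_⟩
  · exact (uniformContinuous_id.sub uniformContinuous_const).const_smul _
  rintro _ ⟨h, hh, rfl⟩
  rw [mem_closedBall_zero_iff] at hh
  have hδh : ‖δ • h‖ ≤ δ := by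
    rw [norm_smul, Real.norm_of_nonneg hδ.le]
    exact mul_le_of_le_one_right hδ.le hh
  obtain ⟨hquot, hvh⟩ := hball (mem_closedBall_zero_iff.2 hδh)
  refine mem_thickening_iff.2 ⟨_, mem_image_of_mem _ (mem_image_of_mem f hvh), ?_⟩
  calc dist (A h) (δ⁻¹ • (f (v + δ • h) - f v))
      = ‖δ⁻¹ • (f (v + δ • h) - f v - A (δ • h))‖ := by
        rw [dist_comm, dist_eq_norm, smul_sub _ _ (A _), map_smul, inv_smul_smul₀ hδ.ne']
    _ ≤ δ⁻¹ * (ε / 2 * δ) := by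
        rw [norm_smul, Real.norm_of_nonneg (inv_nonneg.2 hδ.le)]
        gcongr
        exact hquot.trans (by gcongr)
    _ < ε := by
        rw [mul_comm (ε / 2), inv_mul_cancel_left₀ hδ.ne']
        exact half_lt_self hε

theorem isInducing_id_sub_of_isCompactOperator {A : V →L[ℝ] V} (hA : IsCompactOperator A)
    (h1 : ∀ h, A h = h → h = 0) : IsInducing (ContinuousLinearMap.id ℝ V - A) := by
  have hne : ¬ Module.End.HasEigenvalue (A : Module.End ℝ V) 1 := by
    intro h
    obtain ⟨w, hw⟩ := h.exists_hasEigenvector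
    exact hw.2 (h1 w (by simpa using hw.apply_eq_smul))
  obtain ⟨K, hK⟩ := hA.antilipschitz_of_not_hasEigenvalue one_ne_zero hne
  have hK' : AntilipschitzWith K (ContinuousLinearMap.id ℝ V - A) := by
    refine AntilipschitzWith.of_le_mul_dist fun x y => (hK.le_mul_dist x y).trans_eq ?_
    rw [dist_eq_norm, ← map_sub, dist_eq_norm, ← map_sub, ← norm_neg]
    simp
  exact (hK'.isUniformInducing (ContinuousLinearMap.uniformContinuous _)).isInducing

theorem isBigO_sub_id_sub_of_isCompactOperator {T : V → V} {A : V →L[ℝ] V} {v : V}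
    (hT : HasStrictFDerivAt T A v) (hA : IsCompactOperator A) (h1 : ∀ h, A h = h → h = 0) :
    (fun p : V × V => p.1 - p.2) =O[𝓝 (v, v)] fun p => (p.1 - T p.1) - (p.2 - T p.2) :=
  (((hasStrictFDerivAt_id v).sub hT).isTheta_sub
    (isInducing_id_sub_of_isCompactOperator hA h1)).isBigO_symm

theorem exists_pos_forall_le_norm_sub_lineMap {T : V → V} {D Q : Set V} {I : Set ℝ} {b : V}
    (hD : IsClosed D) (hT : ContinuousOn T D) (hQ : IsCompact Q) (hTQ : MapsTo T D Q)
    (hI : IsCompact I) (h : ∀ x ∈ D, ∀ t ∈ I, AffineMap.lineMap b (T x) t ≠ x) :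
    ∃ η > 0, ∀ x ∈ D, ∀ t ∈ I, η ≤ ‖x - AffineMap.lineMap b (T x) t‖ := by
  set R : V × ℝ → V := fun p => p.1 - AffineMap.lineMap b (T p.1) p.2
  suffices h0 : (0 : V) ∉ closure (R '' D ×ˢ I) by
    obtain ⟨η, hη, hball⟩ := Metric.isOpen_iff.1 isClosed_closure.isOpen_compl 0 h0
    refine ⟨η, hη, fun x hx t ht => not_lt.1 fun hlt => hball (mem_ball_zero_iff.2 hlt)
      (subset_closure ⟨(x, t), ⟨hx, ht⟩, rfl⟩)⟩
  intro h0
  obtain ⟨u, hu, hu0⟩ := mem_closure_iff_ultrafilter.1 h0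
  set w := Ultrafilter.ofComapInfPrincipal hu
  have hw : D ×ˢ I ∈ w := Ultrafilter.ofComapInfPrincipal_mem hu
  have hR : Tendsto R w (𝓝 0) := by
    rwa [Tendsto, ← Ultrafilter.coe_map, Ultrafilter.ofComapInfPrincipal_eq_of_map hu]
  obtain ⟨y, -, hy⟩ := hQ.ultrafilter_le_nhds' (w.map (T ∘ Prod.fst))
    (Ultrafilter.mem_map.2 <| mem_of_superset hw fun p hp => hTQ hp.1)
  obtain ⟨s, hs, hsw⟩ := hI.ultrafilter_le_nhds' (w.map Prod.snd)
    (Ultrafilter.mem_map.2 <| mem_of_superset hw fun p hp => hp.2)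
  replace hy : Tendsto (fun p : V × ℝ => T p.1) w (𝓝 y) := hy
  replace hsw : Tendsto (fun p : V × ℝ => p.2) w (𝓝 s) := hsw
  have hx : Tendsto (fun p : V × ℝ => p.1) w (𝓝 (AffineMap.lineMap b y s)) := by
    simpa [R] using hR.add ((tendsto_const_nhds (x := b)).lineMap hy hsw)
  have hmem : AffineMap.lineMap b y s ∈ D :=
    hD.mem_of_tendsto hx (mem_of_superset hw fun p hp => hp.1)
  have hTy : T (AffineMap.lineMap b y s) = y :=
    tendsto_nhds_unique ((hT _ hmem).tendsto.comp (tendsto_nhdsWithin_iff.2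
      ⟨hx, mem_of_superset hw fun p hp => hp.1⟩)) hy
  exact h _ hmem s hs (by rw [hTy])

theorem exists_pos_forall_le_norm_sub_apply {T : V → V} {D Q : Set V} (hD : IsClosed D)
    (hT : ContinuousOn T D) (hQ : IsCompact Q) (hTQ : MapsTo T D Q) (h : ∀ x ∈ D, T x ≠ x) :
    ∃ η > 0, ∀ x ∈ D, η ≤ ‖x - T x‖ := by
  simpa using exists_pos_forall_le_norm_sub_lineMap (b := 0) (I := {1}) hD hT hQ hTQ
    isCompact_singleton (by simpa using h)

theorem exists_contDiff_forall_norm_sub_lt [FiniteDimensional ℝ E] {φ : E → V} {K : Set E}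
    {L : F →L[ℝ] V} {ε : ℝ} (hK : IsClosed K) (hφ : ContinuousOn φ K)
    (h : ∀ x ∈ K, ∃ c, ‖L c - φ x‖ < ε) :
    ∃ g : E → F, ContDiff ℝ 1 g ∧ ∀ x ∈ K, ‖L (g x) - φ x‖ < ε := by
  have hconv : ∀ x, Convex ℝ {c | x ∈ K → ‖L c - φ x‖ < ε} := by
    intro x
    by_cases hx : x ∈ K
    · simpa [hx, ← dist_eq_norm, ball, preimage] using
        (convex_ball (φ x) ε).linear_preimage L.toLinearMap
    · simpa [hx] using convex_univ
  have hloc : ∀ x, ∃ c, ∀ᶠ y in 𝓝 x, c ∈ {c | y ∈ K → ‖L c - φ y‖ < ε} := by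
    intro x
    by_cases hx : x ∈ K
    · obtain ⟨c, hc⟩ := h x hx
      exact ⟨c, eventually_nhdsWithin_iff.1
        ((continuousWithinAt_const.sub (hφ x hx)).norm.eventually_lt_const hc)⟩
    · exact ⟨0, mem_of_superset (hK.isOpen_compl.mem_nhds hx) fun y hy hyK => absurd hyK hy⟩
  obtain ⟨g, hg⟩ := exists_contMDiffMap_forall_mem_convex_of_local_const (n := 1)
    (modelWithCornersSelf ℝ E) hconv hloc
  exact ⟨g, g.contMDiff.contDiff, hg⟩

theorem exists_injective_continuousLinearMap_subset_range [Nontrivial V] {S : Set V}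
    (hS : S.Finite) :
    ∃ (n : ℕ) (L : (Fin (n + 1) → ℝ) →L[ℝ] V), Function.Injective L ∧ S ⊆ range L := by
  obtain ⟨e, he⟩ := exists_ne (0 : V)
  let E : Submodule ℝ V := Submodule.span ℝ (insert e S)
  have hsub : insert e S ⊆ (E : Set V) := Submodule.subset_span
  have : FiniteDimensional ℝ E := FiniteDimensional.span_of_finite ℝ (hS.insert e)
  have : Nontrivial E :=
    ⟨⟨e, hsub (mem_insert e S)⟩, 0, fun h => he (congrArg Subtype.val h)⟩
  obtain ⟨n, hn⟩ := Nat.exists_eq_add_one.2 (Module.finrank_pos (R := ℝ) (M := E))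
  let Φ : E ≃L[ℝ] (Fin (n + 1) → ℝ) :=
    (Module.finBasisOfFinrankEq ℝ E hn).equivFun.toContinuousLinearEquiv
  refine ⟨n, E.subtypeL.comp Φ.symm.toContinuousLinearMap,
    Subtype.val_injective.comp Φ.symm.injective, fun v hv => ?_⟩
  exact ⟨Φ ⟨v, hsub (mem_insert_of_mem e hv)⟩, by simp⟩

end CompactMaps

section FixedPointCount

variable {E V : Type*} [NormedAddCommGroup E] [NormedSpace ℝ E] [NormedAddCommGroup V]
  [NormedSpace ℝ V]

theorem isBounded_preimage_of_injective [FiniteDimensional ℝ E] {L : E →L[ℝ] V} {s : Set V}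
    (hL : Function.Injective L) (hs : Bornology.IsBounded s) : Bornology.IsBounded (L ⁻¹' s) :=
  have ⟨_, _, hK⟩ := (L : E →ₗ[ℝ] V).exists_antilipschitzWith (LinearMap.ker_eq_bot.2 hL)
  hK.isBounded_preimage hs

theorem sub_sub_lineMap_ne_zero_of_lt_norm {T : V → V} {B : Set V} {L : E →L[ℝ] V} {g : E → E}
    {ε : ℝ} {x y z z' : E} {s : ℝ}
    (hgT : ∀ x, L x ∈ B → ‖L (g x) - T (L x)‖ ≤ ε) (hz : T (L z) = L z) (hz' : T (L z') = L z')
    (hzB : L z ∈ B) (hzB' : L z' ∈ B) (hs : s ∈ Icc (0 : ℝ) 1) (hx : L x ∈ B) (hy : L y ∈ B)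
    (h : 3 * ε < ‖(L x - T (L x)) - (L y - T (L y))‖) :
    (x - g x) - ((y - g y) - AffineMap.lineMap (z - g z) (z' - g z') s) ≠ 0 := by
  intro h0
  have hfix {w : E} (hw : T (L w) = L w) (hwB : L w ∈ B) : L (w - g w) ∈ closedBall 0 ε := by
    simpa [hw, norm_sub_rev] using hgT w hwB
  have hend : ‖AffineMap.lineMap (L (z - g z)) (L (z' - g z')) s‖ ≤ ε :=
    mem_closedBall_zero_iff.1
      ((convex_closedBall 0 ε).lineMap_mem (hfix hz hzB) (hfix hz' hzB') hs)
  have hres : (L x - T (L x)) - (L y - T (L y)) = (L (g x) - T (L x)) - (L (g y) - T (L y))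
      - AffineMap.lineMap (L (z - g z)) (L (z' - g z')) s := by
    have := congrArg L h0
    simp only [AffineMap.lineMap_apply_module, map_add, map_smul, map_sub, map_zero] at this ⊢
    rw [← sub_eq_zero]
    refine Eq.trans ?_ this
    module
  refine h.not_ge ?_
  rw [hres]
  linarith [norm_sub_le_of_le (norm_sub_le_of_le (hgT x hx) (hgT y hy)) hend]

variable {ι : Type*} [Fintype ι] [Nonempty ι]

theorem card_eq_one_of_brouwerDegree_eq {α : Type*} {f : (ι → ℝ) → ι → ℝ} {U : Set (ι → ℝ)}
    {W : α → Set (ι → ℝ)} (hf : ContDiff ℝ 1 f) (hU : IsOpen U) (hUb : Bornology.IsBounded U)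
    (hdeg : brouwerDegree f U = 1) (Z : Finset α) (hW : ∀ z ∈ Z, IsOpen (W z))
    (hWU : ∀ z ∈ Z, W z ⊆ U) (hd : (Z : Set α).PairwiseDisjoint W)
    (h : ∀ x ∈ closure U \ ⋃ z ∈ Z, W z, f x ≠ 0)
    (heq : ∀ z ∈ Z, ∀ z' ∈ Z, brouwerDegree f (W z) = brouwerDegree f (W z')) :
    Z.card = 1 := by
  have hsum := brouwerDegree_eq_sum hf hU hUb Z hW hWU hd h
  obtain ⟨z, hz⟩ : Z.Nonempty := by
    refine Finset.nonempty_of_sum_ne_zero (f := fun z => brouwerDegree f (W z)) ?_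
    rw [← hsum, hdeg]
    exact one_ne_zero
  obtain ⟨c, hc⟩ := exists_int_brouwerDegree_eq hf (hW z hz) (hUb.subset (hWU z hz)) fun x hx => by
    refine h x ⟨closure_mono (hWU z hz) hx.1, fun hx' => ?_⟩
    obtain ⟨z', hz', hxz'⟩ := mem_iUnion₂.1 hx'
    rcases eq_or_ne z z' with rfl | hne
    · exact (hW z hz).frontier_eq ▸ hx |>.2 hxz'
    · exact ((hd hz hz' hne).closure_left (hW z' hz')).notMem_of_mem_left hx.1 hxz'
  have hmul : (Z.card : ℤ) * c = 1 := by
    rw [hdeg, Finset.sum_congr rfl fun z' hz' => heq z' hz' z hz, Finset.sum_const, nsmul_eq_mul,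
      hc] at hsum
    exact_mod_cast hsum.symm
  have := Int.eq_one_or_neg_one_of_mul_eq_one hmul
  lia

variable {T : V → V} {B : Set V}
  {L : (ι → ℝ) →L[ℝ] V} {g : (ι → ℝ) → ι → ℝ} {ε : ℝ}

theorem brouwerDegree_sub_eq_one {b : ι → ℝ} (hL : Function.Injective L) (hg : ContDiff ℝ 1 g)
    (hB : IsOpen B) (hBb : Bornology.IsBounded B) (hb : L b ∈ B)
    (hgT : ∀ x, L x ∈ frontier B → ‖L (g x) - T (L x)‖ ≤ ε)
    (h : ∀ v ∈ frontier B, ∀ t ∈ Icc (0 : ℝ) 1, ε < ‖v - AffineMap.lineMap (L b) (T v) t‖) :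
    brouwerDegree (fun x => x - g x) (L ⁻¹' B) = 1 := by
  have hU : IsOpen (L ⁻¹' B) := hB.preimage L.continuous
  rw [← brouwerDegree_sub_const hU hb]
  refine brouwerDegree_eq_of_segment (by fun_prop) (by fun_prop) hU
    (isBounded_preimage_of_injective hL hBb) fun x hx t ht h0 => ?_
  have hLx : L x ∈ frontier B := L.continuous.frontier_preimage_subset B hx
  have ht' : 1 - t ∈ Icc (0 : ℝ) 1 := ⟨sub_nonneg.2 ht.2, sub_le_self 1 ht.1⟩
  have hres : L x - AffineMap.lineMap (L b) (T (L x)) (1 - t)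
      = (1 - t) • (L (g x) - T (L x)) := by
    have := congrArg L h0
    simp only [AffineMap.lineMap_apply_module, map_add, map_smul, map_sub, map_zero] at this ⊢
    rw [← sub_eq_zero]
    refine Eq.trans ?_ this
    module
  refine (h _ hLx _ ht').not_ge ?_
  rw [hres, norm_smul, Real.norm_of_nonneg ht'.1]
  exact (mul_le_of_le_one_left (norm_nonneg _) ht'.2).trans (hgT x hLx)

theorem brouwerDegree_preimage_ball_eq {z z' : ι → ℝ} {ρ : ℝ} (hL : Function.Injective L)
    (hg : ContDiff ℝ 1 g) (hgT : ∀ x, L x ∈ B → ‖L (g x) - T (L x)‖ ≤ ε)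
    (hz : T (L z) = L z) (hz' : T (L z') = L z') (hρ : 0 ≤ ρ)
    (hB : ∀ s ∈ Icc (0 : ℝ) 1, closedBall (L (AffineMap.lineMap z z' s)) ρ ⊆ B)
    (h : ∀ s ∈ Icc (0 : ℝ) 1, ∀ v ∈ sphere (L (AffineMap.lineMap z z' s)) ρ, 3 * ε <
      ‖(v - T v) - (L (AffineMap.lineMap z z' s) - T (L (AffineMap.lineMap z z' s)))‖) :
    brouwerDegree (fun x => x - g x) (L ⁻¹' ball (L z) ρ) =
      brouwerDegree (fun x => x - g x) (L ⁻¹' ball (L z') ρ) := by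
  set p : ℝ → ι → ℝ := fun s => AffineMap.lineMap z z' s
  set f : (ι → ℝ) → ι → ℝ := fun x => x - g x
  have hf : ContDiff ℝ 1 f := contDiff_id.sub hg
  -- the correction makes `H` equal to the translates of `f` at the ends and small at `x = 0`
  let H : unitInterval → (ι → ℝ) → ι → ℝ := fun s x =>
    f (p s + x) - (f (p s) - AffineMap.lineMap (f z) (f z') (s : ℝ))
  have hU : IsOpen (L ⁻¹' ball (0 : V) ρ) := isOpen_ball.preimage L.continuous
  have htrans (w : ι → ℝ) : brouwerDegree (fun x => f (w + x)) (L ⁻¹' ball 0 ρ) =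
      brouwerDegree f (L ⁻¹' ball (L w) ρ) := by
    rw [← brouwerDegree_comp_add_left f _ w]
    congr 1
    ext x
    simp
  have hH : brouwerDegree (H 0) (L ⁻¹' ball 0 ρ) = brouwerDegree (H 1) (L ⁻¹' ball 0 ρ) := by
    refine brouwerDegree_eq_of_homotopy (fun s => by fun_prop) ?_ hU
      (isBounded_preimage_of_injective hL isBounded_ball) fun s x hx h0 => ?_
    · have := hf.continuous
      have : Continuous p := AffineMap.lineMap_continuous
      fun_prop
    have hv : L (p s + x) ∈ sphere (L (p s)) ρ := by
      simpa using frontier_ball_subset_sphere (L.continuous.frontier_preimage_subset _ hx)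
    refine sub_sub_lineMap_ne_zero_of_lt_norm hgT hz hz' ?_ ?_ s.2 (hB s s.2 ?_) (hB s s.2 ?_)
      (h s s.2 _ hv) h0
    · simpa using hB 0 ⟨le_rfl, zero_le_one⟩ (mem_closedBall_self hρ)
    · simpa using hB 1 ⟨zero_le_one, le_rfl⟩ (mem_closedBall_self hρ)
    · exact sphere_subset_closedBall hv
    · exact mem_closedBall_self hρ
  calc brouwerDegree f (L ⁻¹' ball (L z) ρ) = brouwerDegree (H 0) (L ⁻¹' ball 0 ρ) := by
        simp [H, p, htrans]
    _ = brouwerDegree (H 1) (L ⁻¹' ball 0 ρ) := hH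
    _ = brouwerDegree f (L ⁻¹' ball (L z') ρ) := by simp [H, p, htrans]

theorem card_fixedPoints_eq_one {b : ι → ℝ} {r : ℝ} (hL : Function.Injective L)
    (hg : ContDiff ℝ 1 g) (hgT : ∀ x, L x ∈ closure B → ‖L (g x) - T (L x)‖ ≤ ε) (hB : IsOpen B)
    (hBb : Bornology.IsBounded B) (hb : L b ∈ B)
    (hfr : ∀ v ∈ frontier B, ∀ t ∈ Icc (0 : ℝ) 1, ε < ‖v - AffineMap.lineMap (L b) (T v) t‖)
    (Z : Finset (ι → ℝ)) (hZ : ∀ z ∈ Z, T (L z) = L z) (hr : 0 < r)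
    (hZr : ∀ v ∈ convexHull ℝ (L '' Z), closedBall v r ⊆ B ∧
      ∀ x ∈ closedBall v r, r * ‖x - v‖ ≤ ‖(x - T x) - (v - T v)‖)
    (hε : 3 * ε < r * (r / 2))
    (hoff : ∀ v ∈ closure B \ ⋃ z ∈ Z, ball (L z) (r / 2), ε < ‖v - T v‖) : Z.card = 1 := by
  have hr2 : r / 2 ≤ r := half_le_self hr.le
  have hmem {z : ι → ℝ} (hz : z ∈ Z) : L z ∈ convexHull ℝ (L '' Z) :=
    subset_convexHull ℝ _ (mem_image_of_mem L hz)
  refine card_eq_one_of_brouwerDegree_eq (f := fun x => x - g x) (U := L ⁻¹' B)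
    (W := fun z => L ⁻¹' ball (L z) (r / 2)) (contDiff_id.sub hg) (hB.preimage L.continuous)
    (isBounded_preimage_of_injective hL hBb)
    (brouwerDegree_sub_eq_one hL hg hB hBb hb (fun x hx => hgT x hx.1) hfr) Z
    (fun z _ => isOpen_ball.preimage L.continuous)
    (fun z hz x hx => (hZr _ (hmem hz)).1 (ball_subset_closedBall (ball_subset_ball hr2 hx)))
    ?_ ?_ ?_
  · intro z hz z' hz' hne
    refine (ball_disjoint_ball ?_).preimage L
    by_contra! hlt
    exact hne (hL (eq_of_mul_norm_sub_le (f := fun x => x - T x) hr (by simp [hZ z hz, hZ z' hz'])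
      ((hZr _ (hmem hz)).2 (L z') (mem_closedBall'.2 (hlt.le.trans (add_halves r).le)))).symm)
  · rintro x ⟨hx, hxW⟩ h0
    have hxB : L x ∈ closure B := L.continuous.closure_preimage_subset B hx
    refine (hoff (L x) ⟨hxB, by simpa using hxW⟩).not_ge ?_
    have hgx : g x = x := (sub_eq_zero.1 h0).symm
    simpa [hgx] using hgT x hxB
  · intro z hz z' hz'
    have hseg {s : ℝ} (hs : s ∈ Icc (0 : ℝ) 1) :
        L (AffineMap.lineMap z z' s) ∈ convexHull ℝ (L '' Z) := by
      rw [← L.coe_coe, ← LinearMap.coe_toAffineMap, AffineMap.apply_lineMap]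
      exact (convex_convexHull ℝ _).lineMap_mem (hmem hz) (hmem hz') hs
    refine brouwerDegree_preimage_ball_eq hL hg (fun x hx => hgT x (subset_closure hx))
      (hZ z hz) (hZ z' hz') (half_pos hr).le
      (fun s hs => (closedBall_subset_closedBall hr2).trans (hZr _ (hseg hs)).1) fun s hs v hv => ?_
    have hexp := (hZr _ (hseg hs)).2 v
      (closedBall_subset_closedBall hr2 (sphere_subset_closedBall hv))
    rw [mem_sphere_iff_norm.1 hv] at hexp
    exact hε.trans_le hexp

end FixedPointCount

section FixedPoints

variable {V : Type*} [NormedAddCommGroup V] {T : V → V} {B D : Set V}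

theorem isCompact_fixedPoints (hD : IsClosed D) (hT : ContinuousOn T D)
    (hc : IsCompact (closure (T '' D))) : IsCompact {x | x ∈ D ∧ T x = x} := by
  have hclosed : IsClosed {x | x ∈ D ∧ T x = x} := by
    have := (hT.sub continuousOn_id).preimage_isClosed_of_isClosed hD (isClosed_singleton (x := 0))
    simpa [inter_def, sub_eq_zero] using this
  exact hc.of_isClosed_subset hclosed fun x hx => subset_closure ⟨x, hx.1, hx.2⟩

variable [NormedSpace ℝ V]

theorem exists_approximation_subset_range [Nontrivial V] {S : Set V} {ε : ℝ} (hD : IsClosed D)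
    (hT : ContinuousOn T D) (hc : IsCompact (closure (T '' D))) (hS : S.Finite) (hε : 0 < ε) :
    ∃ (n : ℕ) (L : (Fin (n + 1) → ℝ) →L[ℝ] V) (g : (Fin (n + 1) → ℝ) → Fin (n + 1) → ℝ),
      Function.Injective L ∧ S ⊆ range L ∧ ContDiff ℝ 1 g ∧
        ∀ x, L x ∈ D → ‖L (g x) - T (L x)‖ < ε := by
  obtain ⟨N, hN, hTN⟩ := totallyBounded_iff.1 (hc.totallyBounded.subset subset_closure) ε hε
  obtain ⟨n, L, hL, hrange⟩ := exists_injective_continuousLinearMap_subset_range (hS.union hN)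
  obtain ⟨g, hg, hgT⟩ := exists_contDiff_forall_norm_sub_lt (φ := T ∘ L) (L := L) (ε := ε)
    (hD.preimage L.continuous) (hT.comp L.continuous.continuousOn fun _ => id) fun x hx => by
      obtain ⟨y, hy, hxy⟩ := mem_iUnion₂.1 (hTN (mem_image_of_mem T hx))
      obtain ⟨c, rfl⟩ := hrange (Or.inr hy)
      exact ⟨c, by rwa [mem_ball', dist_eq_norm] at hxy⟩
  exact ⟨n, L, g, hL, subset_union_left.trans hrange, hg, hgT⟩

theorem exists_pos_forall_mem_convexHull (hB : IsOpen B) (hBc : Convex ℝ B) {Z : Set V}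
    (hZ : Z.Finite) (hZB : Z ⊆ B)
    (hexp : ∀ v ∈ B, (fun p : V × V => p.1 - p.2) =O[𝓝 (v, v)]
      fun p => (p.1 - T p.1) - (p.2 - T p.2)) :
    ∃ r > 0, ∀ v ∈ convexHull ℝ Z, closedBall v r ⊆ B ∧
      ∀ x ∈ closedBall v r, r * ‖x - v‖ ≤ ‖(x - T x) - (v - T v)‖ := by
  have hK : IsCompact (convexHull ℝ Z) := hZ.isCompact_convexHull ℝ
  have hKB : convexHull ℝ Z ⊆ B := convexHull_min hZB hBc
  obtain ⟨δ, hδ, hδB⟩ := hK.exists_cthickening_subset_open hB hKB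
  have hev := eventually_forall_mem_closedBall_mul_norm_sub_le (f := fun x => x - T x) hK
    fun v hv => hexp v (hKB hv)
  obtain ⟨r, hr, hr0, hrδ⟩ := (hev.and (Ioo_mem_nhdsGT hδ)).exists
  exact ⟨r, hr0, fun v hv => ⟨(closedBall_subset_closedBall hrδ.le).trans
    ((closedBall_subset_cthickening hv δ).trans hδB), hr v hv⟩⟩

theorem exists_fixedPoints_eq_singleton [Nontrivial V] {b : V} {r : ℝ} (hB : IsOpen B)
    (hBb : Bornology.IsBounded B) (hb : b ∈ B) (hT : ContinuousOn T (closure B))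
    (hc : IsCompact (closure (T '' closure B)))
    (hLS : ∀ v ∈ frontier B, ∀ t ∈ Icc (0 : ℝ) 1, AffineMap.lineMap b (T v) t ≠ v)
    (hZf : {x | x ∈ closure B ∧ T x = x}.Finite) (hr : 0 < r)
    (hZr : ∀ v ∈ convexHull ℝ {x | x ∈ closure B ∧ T x = x}, closedBall v r ⊆ B ∧
      ∀ x ∈ closedBall v r, r * ‖x - v‖ ≤ ‖(x - T x) - (v - T v)‖) :
    ∃ z, {x | x ∈ closure B ∧ T x = x} = {z} := by
  set Z : Set V := {x | x ∈ closure B ∧ T x = x}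
  have hTQ : MapsTo T (closure B) (closure (T '' closure B)) :=
    (mapsTo_image T _).mono_right subset_closure
  obtain ⟨η₁, hη₁, hfr⟩ := exists_pos_forall_le_norm_sub_lineMap isClosed_frontier
    (hT.mono frontier_subset_closure) hc (hTQ.mono_left frontier_subset_closure) isCompact_Icc hLS
  obtain ⟨η₂, hη₂, hoff⟩ := exists_pos_forall_le_norm_sub_apply
    (isClosed_closure.sdiff (isOpen_biUnion fun z (_ : z ∈ Z) => isOpen_ball (ε := r / 2)))
    (hT.mono sdiff_subset) hc (hTQ.mono_left sdiff_subset)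
    fun x hx hTx => hx.2 (mem_biUnion (show x ∈ Z from ⟨hx.1, hTx⟩) (mem_ball_self (half_pos hr)))
  obtain ⟨ε, hε, hε₁, hε₂, hε₃⟩ : ∃ ε > 0, ε < η₁ ∧ ε < η₂ ∧ ε < r * (r / 2) / 3 := by
    simpa [and_assoc] using
      exists_between (show 0 < min η₁ (min η₂ (r * (r / 2) / 3)) by positivity)
  obtain ⟨n, L, g, hL, hrange, hg, hgT⟩ :=
    exists_approximation_subset_range isClosed_closure hT hc (hZf.insert b) hε
  obtain ⟨b, rfl⟩ := hrange (mem_insert b Z)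
  have hZL : L '' (L ⁻¹' Z) = Z :=
    image_preimage_eq_of_subset ((subset_insert _ Z).trans hrange)
  set ZL := (hZf.preimage hL.injOn).toFinset
  have hcard : ZL.card = 1 := by
    refine card_fixedPoints_eq_one hL hg (fun x hx => (hgT x hx).le) hB hBb hb
      (fun v hv t ht => hε₁.trans_le (hfr v hv t ht)) ZL (by simp [ZL, Z]) hr
      (by simpa [ZL, hZL] using hZr) (by linarith) fun v hv => hε₂.trans_le (hoff v ?_)
    rw [← hZL, biUnion_image]
    simpa [ZL] using hv
  obtain ⟨z, hz⟩ := Finset.card_eq_one.1 hcard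
  exact ⟨L z, by rw [← hZL, ← image_singleton, ← Finset.coe_singleton, ← hz, Finite.coe_toFinset]⟩

theorem existsUnique_fixedPoint_of_isBigO_sub {b : V} (hB : IsOpen B) (hBc : Convex ℝ B)
    (hBb : Bornology.IsBounded B) (hb : b ∈ B) (hT : ContinuousOn T (closure B))
    (hc : IsCompact (closure (T '' closure B)))
    (hLS : ∀ v ∈ frontier B, ∀ t ∈ Icc (0 : ℝ) 1, AffineMap.lineMap b (T v) t ≠ v)
    (hexp : ∀ v ∈ B, (fun p : V × V => p.1 - p.2) =O[𝓝 (v, v)]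
      fun p => (p.1 - T p.1) - (p.2 - T p.2)) :
    ∃! x, x ∈ closure B ∧ T x = x := by
  rcases subsingleton_or_nontrivial V with hV | hV
  · exact ⟨b, ⟨subset_closure hb, Subsingleton.elim _ _⟩, fun y _ => Subsingleton.elim _ _⟩
  have hZB : {x | x ∈ closure B ∧ T x = x} ⊆ B := fun x hx => by
    by_contra hxB
    exact hLS x (hB.frontier_eq ▸ ⟨hx.1, hxB⟩) 1 ⟨zero_le_one, le_rfl⟩ (by simpa using hx.2)
  have hZf := finite_of_isCompact_of_isBigO_sub (f := fun x => x - T x)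
    (isCompact_fixedPoints isClosed_closure hT hc) (fun z hz => sub_eq_zero.2 hz.2.symm)
    fun v hv => hexp v (hZB hv)
  obtain ⟨r, hr, hZr⟩ := exists_pos_forall_mem_convexHull hB hBc hZf hZB hexp
  obtain ⟨z, hz⟩ := exists_fixedPoints_eq_singleton hB hBb hb hT hc hLS hZf hr hZr
  exact ⟨z, hz.symm.subset rfl, fun y hy => hz.subset hy⟩

theorem lineMap_ne_of_mapsTo_closure {b : V} (hB : IsOpen B) (hBc : Convex ℝ B) (hb : b ∈ B)
    (hmaps : MapsTo T (frontier B) (closure B)) (hne : ∀ v ∈ frontier B, T v ≠ v) :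
    ∀ v ∈ frontier B, ∀ t ∈ Icc (0 : ℝ) 1, AffineMap.lineMap b (T v) t ≠ v := by
  intro v hv t ht hvt
  rcases ht.2.eq_or_lt with rfl | ht1
  · exact hne v hv (by simpa using hvt)
  · refine hv.2 ?_
    rw [← hvt, AffineMap.lineMap_apply_module]
    exact hBc.combo_interior_closure_mem_interior (hB.interior_eq.symm ▸ hb) (hmaps hv)
      (sub_pos.2 ht1) ht.1 (sub_add_cancel 1 t)

theorem stmt7_general [CompleteSpace V] {b : V} (hB : IsOpen B) (hBc : Convex ℝ B)
    (hBb : Bornology.IsBounded B) (hb : b ∈ B) (hT : ContinuousOn T (closure B))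
    (hc : IsCompact (closure (T '' closure B))) {T' : V → V →L[ℝ] V}
    (hderiv : ∀ v ∈ B, HasFDerivAt T (T' v) v) (hderivcont : ContinuousOn T' B)
    (hT' : ∀ v ∈ B, ∀ h, T' v h = h → h = 0)
    (hLS : ∀ v ∈ frontier B, ∀ t ∈ Icc (0 : ℝ) 1, AffineMap.lineMap b (T v) t ≠ v) :
    ∃! x, x ∈ closure B ∧ T x = x := by
  refine existsUnique_fixedPoint_of_isBigO_sub hB hBc hBb hb hT hc hLS fun v hv => ?_
  have hBv : B ∈ 𝓝 v := hB.mem_nhds hv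
  have hstrict : HasStrictFDerivAt T (T' v) v :=
    hasStrictFDerivAt_of_hasFDerivAt_of_continuousAt (mem_of_superset hBv hderiv)
      (hderivcont.continuousAt hBv)
  have hcompact : IsCompactOperator (T' v) :=
    isCompactOperator_of_hasFDerivAt (hderiv v hv) (mem_of_superset hBv subset_closure)
      (hc.totallyBounded.subset subset_closure)
  exact isBigO_sub_id_sub_of_isCompactOperator hstrict hcompact (hT' v hv)

end FixedPoints

end

/-- (Kellogg) Let `B` be a bounded convex open subset of a real Banach space `V`, and let
`T : closure B → closure B` be a continuous map with precompact image that is continuously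
Fréchet differentiable on `B`.  If (a) for each `v ∈ B`, `1` is not an eigenvalue of the
derivative of `T` at `v`, and (b) `T(v) ≠ v` for `v` in the boundary of `B`, then `T` has
exactly one fixed point in `closure B`. -/
theorem stmt7 {V : Type*} [NormedAddCommGroup V] [NormedSpace ℝ V] [CompleteSpace V]
    (B : Set V) (hBne : B.Nonempty) (hBopen : IsOpen B) (hBconv : Convex ℝ B)
    (hBbdd : Bornology.IsBounded B)
    (T : V → V) (hmaps : Set.MapsTo T (closure B) (closure B))
    (hcont : ContinuousOn T (closure B))
    (hcpt : IsCompact (closure (T '' closure B)))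
    (T' : V → (V →L[ℝ] V))
    (hderiv : ∀ v ∈ B, HasFDerivAt T (T' v) v)
    (hderivcont : ContinuousOn T' B)
    (ha : ∀ v ∈ B, ∀ h : V, T' v h = h → h = 0)
    (hb : ∀ v ∈ frontier B, T v ≠ v) :
    ∃! x, x ∈ closure B ∧ T x = x := by
  obtain ⟨b, hb'⟩ := hBne
  exact stmt7_general hBopen hBconv hBbdd hb' hcont hcpt hderiv hderivcont ha
    (lineMap_ne_of_mapsTo_closure hBopen hBconv hb'
      (hmaps.mono_left frontier_subset_closure) hb)
end
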